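/- arXiv:2412.01951 — 13 statements merged into one kernel-verified Lean document; each statement's English description precedes it below -/
import Mathlib

section
/- Let V be a finite vocabulary, H ≥ 1, and let π be an autoregressive model over Y = V^H, i.e. π(y_{1:H}) = ∏_{h=1}^H π_h(y_h | y_{1:h-1}) where each π_h(·|y_{1:h-1}) is a probability distribution on V. If y* ∈ V^H is the unique maximizer of y ↦ π(y) over V^H and π(y*) > 1/2, then any greedy decoding sequence ŷ, defined by choosing ŷ_h ∈ argmax_{v∈V} π_h(v | ŷ_1,…,ŷ_{h-1}) for h = 1,…,H, satisfies ŷ = y*. Moreover, this is tight: there exist a finite vocabulary V, a horizon H, and an autoregressive model π with a unique maximizer y* satisfying π(y*) ≤ 1/2 for which the greedy decoding sequence differs from y*. -/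
open Finset

/-- Sequence-level probability of an autoregressive model with conditionals `cond`. -/
noncomputable def seqProb {V : Type} (H : ℕ) (cond : List V → V → ℝ) (y : Fin H → V) : ℝ :=
  ∏ h : Fin H, cond ((List.ofFn y).take (h : ℕ)) (y h)

/-- `yhat` is a greedy decoding sequence for the autoregressive model `cond`. -/
def IsGreedy {V : Type} (H : ℕ) (cond : List V → V → ℝ) (yhat : Fin H → V) : Prop :=
  ∀ h : Fin H, ∀ v : V,
    cond ((List.ofFn yhat).take (h : ℕ)) v ≤ cond ((List.ofFn yhat).take (h : ℕ)) (yhat h)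

/-- The conditional of a token along `y` is at least the probability of the whole sequence `y`. -/
lemma seqProb_le_cond {V : Type} [Fintype V] {H : ℕ} {cond : List V → V → ℝ}
    (hnonneg : ∀ l v, 0 ≤ cond l v)
    (hsum : ∀ l : List V, l.length < H → ∑ v : V, cond l v = 1) (y : Fin H → V) (h : Fin H) :
    seqProb H cond y ≤ cond ((List.ofFn y).take (h : ℕ)) (y h) := by
  classical
  have hle : ∀ k : Fin H, cond ((List.ofFn y).take (k : ℕ)) (y k) ≤ 1 := fun k => by
    rw [← hsum ((List.ofFn y).take (k : ℕ)) (by simp)]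
    exact Finset.single_le_sum (fun v _ => hnonneg _ v) (Finset.mem_univ _)
  rw [seqProb, ← Finset.mul_prod_erase _ _ (Finset.mem_univ h)]
  exact mul_le_of_le_one_right (hnonneg _ _)
    (Finset.prod_le_one (fun k _ => hnonneg _ _) fun k _ => hle k)

/-- If the sequence `y` has probability more than `1 / 2`, every greedy decoding equals `y`. -/
lemma IsGreedy.eq_of_half_lt_seqProb {V : Type} [Fintype V] {H : ℕ} {cond : List V → V → ℝ}
    (hnonneg : ∀ l v, 0 ≤ cond l v)
    (hsum : ∀ l : List V, l.length < H → ∑ v : V, cond l v = 1) {y yhat : Fin H → V}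
    (hy : 1 / 2 < seqProb H cond y) (hg : IsGreedy H cond yhat) : yhat = y := by
  classical
  suffices ∀ (n : ℕ) (hn : n < H), yhat ⟨n, hn⟩ = y ⟨n, hn⟩ from funext fun h => this h h.2
  intro n
  induction n using Nat.strong_induction_on with
  | _ n ih =>
    intro hn
    have hprefix : (List.ofFn yhat).take n = (List.ofFn y).take n := by
      refine List.ext_getElem (by simp) fun i hi _ => ?_
      simp only [List.length_take, List.length_ofFn, lt_min_iff] at hi
      simpa using ih i hi.1 hi.2
    by_contra hne
    have hgreedy := hg ⟨n, hn⟩ (y ⟨n, hn⟩)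
    have hhalf := seqProb_le_cond hnonneg hsum y ⟨n, hn⟩
    have hpair := Finset.sum_le_univ_sum_of_nonneg (s := {yhat ⟨n, hn⟩, y ⟨n, hn⟩})
      (hnonneg ((List.ofFn y).take n))
    rw [Finset.sum_pair hne, hsum _ (by simp [hn])] at hpair
    simp only [hprefix] at hgreedy hhalf
    linarith

/-- A two-token model: after the prefix `[0]` the next token is `0`; otherwise it is uniform. -/
noncomputable def tieCond (l : List (Fin 2)) (v : Fin 2) : ℝ :=
  if l = [0] then (if v = 0 then 1 else 0) else 1 / 2

lemma seqProb_tieCond (y : Fin 2 → Fin 2) :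
    seqProb 2 tieCond y = 1 / 2 * tieCond [y 0] (y 1) := by
  simp [seqProb, Fin.prod_univ_two, List.ofFn_succ, tieCond]

theorem greedy_decoding_succeeds_for_sharpened_models_and_tightness :
    (∀ (V : Type) [Fintype V] (H : ℕ), 1 ≤ H →
      ∀ cond : List V → V → ℝ,
        (∀ l v, 0 ≤ cond l v) →
        (∀ l : List V, l.length < H → ∑ v : V, cond l v = 1) →
        ∀ ystar : Fin H → V,
          (∀ y : Fin H → V, y ≠ ystar → seqProb H cond y < seqProb H cond ystar) →
          1 / 2 < seqProb H cond ystar →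
          ∀ yhat : Fin H → V, IsGreedy H cond yhat → yhat = ystar)
    ∧
    (∃ (n H : ℕ) (cond : List (Fin n) → Fin n → ℝ),
      0 < n ∧ 1 ≤ H ∧
      (∀ l v, 0 ≤ cond l v) ∧
      (∀ l : List (Fin n), l.length < H → ∑ v, cond l v = 1) ∧
      ∃ ystar yhat : Fin H → Fin n,
        (∀ y, y ≠ ystar → seqProb H cond y < seqProb H cond ystar) ∧
        seqProb H cond ystar ≤ 1 / 2 ∧
        IsGreedy H cond yhat ∧ yhat ≠ ystar) := by
  refine ⟨fun V _ H _ cond hnonneg hsum ystar _ hhalf yhat hg =>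
    hg.eq_of_half_lt_seqProb hnonneg hsum hhalf, 2, 2, tieCond, by norm_num, by norm_num,
    fun l v => by unfold tieCond; positivity, fun l _ => ?_, ![0, 0], ![1, 0], fun y hy => ?_,
    ?_, fun h v => ?_, by simp⟩
  · by_cases hl : l = [0] <;> simp [tieCond, hl]
  · have hy' : ¬(y 0 = 0 ∧ y 1 = 0) := fun h => hy (by ext i; fin_cases i <;> simp [h])
    rw [seqProb_tieCond, seqProb_tieCond]
    by_cases h0 : y 0 = 0
    · have h1 : y 1 ≠ 0 := fun h1 => hy' ⟨h0, h1⟩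
      simp [tieCond, h0, h1]
    · norm_num [tieCond, h0]
  · norm_num [seqProb_tieCond, tieCond]
  · fin_cases h <;> simp [tieCond, List.ofFn_succ]
end

section
/- Let λ, K > 0 with λ ≤ K, let d, T ∈ ℕ, and let A_1,…,A_T ∈ ℝ^{d×d} be positive semi-definite matrices with Tr(A_t) ≤ K for all t ∈ [T]. Define Γ_0 := λ·I_d and Γ_t := λ·I_d + Σ_{i=1}^t A_i. Then Σ_{t=1}^T Tr(Γ_{t-1}^{-1} A_t) ≤ d·K·log((T+1)K/λ) / (λ·log(1+K/λ)). -/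
open scoped MatrixOrder in
theorem Matrix.PosSemidef.exists_eq_conjTranspose_mul_self {n : Type*} [Fintype n] [DecidableEq n]
    {M : Matrix n n ℝ} (hM : M.PosSemidef) : ∃ B : Matrix n n ℝ, M = B.conjTranspose * B :=
  CStarAlgebra.nonneg_iff_eq_star_mul_self.mp hM.nonneg

theorem Matrix.PosSemidef.trace_mul_nonneg {n : Type*} [Fintype n] [DecidableEq n]
    {M N : Matrix n n ℝ} (hM : M.PosSemidef) (hN : N.PosSemidef) : 0 ≤ (M * N).trace := by
  obtain ⟨B, rfl⟩ := hM.exists_eq_conjTranspose_mul_self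
  rw [Matrix.mul_assoc, Matrix.trace_mul_comm]
  exact (hN.mul_mul_conjTranspose_same B).trace_nonneg

theorem Matrix.IsHermitian.det_one_add_eq_prod {n : Type*} [Fintype n] [DecidableEq n]
    {M : Matrix n n ℝ} (hM : M.IsHermitian) : (1 + M).det = ∏ i, (1 + hM.eigenvalues i) := by
  have h := congrArg (Polynomial.eval (-1)) hM.charpoly_eq
  rw [Matrix.eval_charpoly, Polynomial.eval_prod] at h
  have hneg : Matrix.scalar n (-1 : ℝ) - M = -(1 + M) := by
    simp only [map_neg, map_one]
    abel
  have hfac : ∀ i, Polynomial.eval (-1) (Polynomial.X - Polynomial.C (hM.eigenvalues i)) =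
      -1 * (1 + hM.eigenvalues i) := fun i => by
    simp only [Polynomial.eval_sub, Polynomial.eval_X, Polynomial.eval_C]
    ring
  rw [hneg, Matrix.det_neg] at h
  simp only [RCLike.ofReal_real_eq_id, id_eq, hfac, Finset.prod_mul_distrib, Finset.prod_const,
    Finset.card_univ] at h
  exact mul_left_cancel₀ (pow_ne_zero _ (by norm_num)) h

theorem Finset.one_add_sum_le_prod_one_add {ι : Type*} (s : Finset ι) {f : ι → ℝ}
    (hf : ∀ i, 0 ≤ f i) : 1 + ∑ i ∈ s, f i ≤ ∏ i ∈ s, (1 + f i) := by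
  classical
  induction s using Finset.induction_on with
  | empty => simp
  | insert a s ha ih =>
    rw [Finset.sum_insert ha, Finset.prod_insert ha]
    nlinarith [mul_le_mul_of_nonneg_left ih (add_nonneg zero_le_one (hf a)),
      mul_nonneg (hf a) (Finset.sum_nonneg fun i (_ : i ∈ s) => hf i)]

theorem Matrix.PosSemidef.one_add_trace_le_det {n : Type*} [Fintype n] [DecidableEq n]
    {M : Matrix n n ℝ} (hM : M.PosSemidef) : 1 + M.trace ≤ (1 + M).det := by
  rw [hM.isHermitian.det_one_add_eq_prod, hM.isHermitian.trace_eq_sum_eigenvalues]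
  exact Finset.one_add_sum_le_prod_one_add _ hM.eigenvalues_nonneg

theorem Matrix.PosSemidef.det_one_add_le {n : Type*} [Fintype n] [DecidableEq n]
    {M : Matrix n n ℝ} (hM : M.PosSemidef) : (1 + M).det ≤ (1 + M.trace) ^ Fintype.card n := by
  rw [hM.isHermitian.det_one_add_eq_prod, hM.isHermitian.trace_eq_sum_eigenvalues,
    ← Finset.card_univ, ← Finset.prod_const]
  refine Finset.prod_le_prod ?_ ?_
  · exact fun i _ => add_nonneg zero_le_one (hM.eigenvalues_nonneg i)
  · intro i _
    have := Finset.single_le_sum (fun j _ => hM.eigenvalues_nonneg j) (Finset.mem_univ i)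
    simpa using this

theorem Matrix.PosDef.det_mul_one_add_trace_le {n : Type*} [Fintype n] [DecidableEq n]
    {G M : Matrix n n ℝ} (hG : G.PosDef) (hM : M.PosSemidef) :
    G.det * (1 + (G⁻¹ * M).trace) ≤ (G + M).det := by
  obtain ⟨B, hB⟩ := hG.inv.posSemidef.exists_eq_conjTranspose_mul_self
  have hdet : IsUnit G.det := hG.det_pos.ne'.isUnit
  have htrace : (G⁻¹ * M).trace = (B * M * B.conjTranspose).trace := by
    rw [hB, Matrix.mul_assoc, Matrix.trace_mul_comm]
  have hfactor : G + M = G * (1 + B.conjTranspose * (B * M)) := by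
    rw [← Matrix.mul_assoc, ← hB, Matrix.mul_add, Matrix.mul_one,
      Matrix.mul_nonsing_inv_cancel_left _ _ hdet]
  rw [hfactor, Matrix.det_mul, Matrix.det_one_add_mul_comm, htrace]
  exact mul_le_mul_of_nonneg_left (hM.mul_mul_conjTranspose_same B).one_add_trace_le_det
    hG.det_pos.le

theorem Matrix.PosSemidef.posDef_smul_one_add {n : Type*} [Fintype n] [DecidableEq n]
    {c : ℝ} (hc : 0 < c) {S : Matrix n n ℝ} (hS : S.PosSemidef) :
    (c • (1 : Matrix n n ℝ) + S).PosDef :=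
  (Matrix.PosDef.one.smul hc).add_posSemidef hS

theorem Matrix.PosSemidef.inv_smul_one_sub_inv {n : Type*} [Fintype n] [DecidableEq n]
    {c : ℝ} (hc : 0 < c) {S : Matrix n n ℝ} (hS : S.PosSemidef) :
    (c⁻¹ • (1 : Matrix n n ℝ) - (c • (1 : Matrix n n ℝ) + S)⁻¹).PosSemidef := by
  set G := c • (1 : Matrix n n ℝ) + S with hGdef
  have hG : G.PosDef := hS.posDef_smul_one_add hc
  have hdet : IsUnit G.det := hG.det_pos.ne'.isUnit
  have hN : (c⁻¹ • (c • S + S * S)).PosSemidef := by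
    refine (Matrix.PosSemidef.add (hS.smul hc.le) ?_).smul (inv_nonneg.mpr hc.le)
    simpa only [hS.isHermitian.eq] using Matrix.posSemidef_self_mul_conjTranspose S
  have hconj := hN.mul_mul_conjTranspose_same G⁻¹
  rw [hG.inv.isHermitian.eq] at hconj
  have hsq : c⁻¹ • (c • S + S * S) = G * (c⁻¹ • (1 : Matrix n n ℝ) - G⁻¹) * G := by
    rw [Matrix.mul_sub, Matrix.mul_nonsing_inv _ hdet, Matrix.sub_mul, hGdef]
    simp only [Matrix.mul_smul, Matrix.mul_one, Matrix.one_mul, Matrix.smul_mul, Matrix.add_mul,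
      Matrix.mul_add, smul_add, smul_smul, inv_mul_cancel₀ hc.ne',
      mul_inv_cancel₀ hc.ne', one_smul]
    abel
  rwa [hsq, Matrix.mul_assoc G, Matrix.nonsing_inv_mul_cancel_left _ _ hdet,
    Matrix.mul_nonsing_inv_cancel_right _ _ hdet] at hconj

theorem Matrix.PosSemidef.trace_inv_mul_le {n : Type*} [Fintype n] [DecidableEq n]
    {c : ℝ} (hc : 0 < c) {S M : Matrix n n ℝ} (hS : S.PosSemidef) (hM : M.PosSemidef) :
    ((c • (1 : Matrix n n ℝ) + S)⁻¹ * M).trace ≤ M.trace / c := by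
  have h := (hS.inv_smul_one_sub_inv hc).trace_mul_nonneg hM
  rw [Matrix.sub_mul, Matrix.trace_sub, Matrix.smul_mul, Matrix.one_mul, Matrix.trace_smul,
    smul_eq_mul, inv_mul_eq_div] at h
  linarith

theorem Real.mul_log_one_add_le {x c : ℝ} (hx : 0 ≤ x) (hxc : x ≤ c) (hc : 0 < c) :
    x * Real.log (1 + c) ≤ c * Real.log (1 + x) := by
  have h := strictConcaveOn_log_Ioi.concaveOn.2 (Set.mem_Ioi.mpr one_pos)
    (Set.mem_Ioi.mpr (by linarith : 0 < 1 + c))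
    (sub_nonneg.mpr ((div_le_one hc).mpr hxc)) (div_nonneg hx hc.le)
    (sub_add_cancel 1 (x / c))
  have hcomb : (1 - x / c) * 1 + x / c * (1 + c) = 1 + x := by field_simp; ring
  simp only [smul_eq_mul, Real.log_one, mul_zero, zero_add, hcomb] at h
  rwa [div_mul_eq_mul_div, div_le_iff₀ hc, mul_comm (Real.log _)] at h

/-- Elliptic potential lemma. -/
theorem elliptic_potential
    (d T : ℕ) (lam K : ℝ) (hlam : 0 < lam) (hK : 0 < K) (hlamK : lam ≤ K)
    (A : ℕ → Matrix (Fin d) (Fin d) ℝ)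
    (hpsd : ∀ t ∈ Finset.range T, (A t).PosSemidef)
    (htr : ∀ t ∈ Finset.range T, (A t).trace ≤ K) :
    ∑ t ∈ Finset.range T,
        ((lam • (1 : Matrix (Fin d) (Fin d) ℝ) + ∑ i ∈ Finset.range t, A i)⁻¹ * A t).trace
      ≤ d * K * Real.log ((T + 1) * K / lam) / (lam * Real.log (1 + K / lam)) := by
  set S : ℕ → Matrix (Fin d) (Fin d) ℝ := fun t => ∑ i ∈ Finset.range t, A i with hSdef
  set G : ℕ → Matrix (Fin d) (Fin d) ℝ := fun t => lam • 1 + S t with hGdef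
  have hc : 0 < K / lam := div_pos hK hlam
  have hlog : 0 < Real.log (1 + K / lam) := Real.log_pos (by linarith)
  have hS : ∀ t ≤ T, (S t).PosSemidef := fun t ht =>
    Matrix.posSemidef_sum _ fun i hi => hpsd i
      (Finset.mem_range.mpr ((Finset.mem_range.mp hi).trans_le ht))
  have hG : ∀ t ≤ T, (G t).PosDef := fun t ht => (hS t ht).posDef_smul_one_add hlam
  have hstep : ∀ t ∈ Finset.range T, ((G t)⁻¹ * A t).trace * Real.log (1 + K / lam) ≤
      K / lam * (Real.log (G (t + 1)).det - Real.log (G t).det) := by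
    intro t ht
    have htT := Finset.mem_range.mp ht
    have hx : 0 ≤ ((G t)⁻¹ * A t).trace :=
      (hG t htT.le).inv.posSemidef.trace_mul_nonneg (hpsd t ht)
    have hxc : ((G t)⁻¹ * A t).trace ≤ K / lam :=
      ((hS t htT.le).trace_inv_mul_le hlam (hpsd t ht)).trans (by gcongr; exact htr t ht)
    refine (Real.mul_log_one_add_le hx hxc hc).trans (mul_le_mul_of_nonneg_left ?_ hc.le)
    have hdet := (hG t htT.le).det_pos
    have hsucc : G (t + 1) = G t + A t := by
      simp only [hGdef, hSdef, Finset.sum_range_succ, add_assoc]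
    rw [le_sub_iff_add_le', ← Real.log_mul hdet.ne' (by positivity), hsucc]
    exact Real.log_le_log (by positivity) ((hG t htT.le).det_mul_one_add_trace_le (hpsd t ht))
  have hsum := Finset.sum_le_sum hstep
  rw [← Finset.sum_mul, ← Finset.mul_sum, Finset.sum_range_sub fun t => Real.log (G t).det]
    at hsum
  have hSlam : (lam⁻¹ • S T).PosSemidef := (hS T le_rfl).smul (inv_nonneg.mpr hlam.le)
  have hGT : G T = lam • (1 + lam⁻¹ • S T) := by
    rw [smul_add, smul_inv_smul₀ hlam.ne']
  have hG0 : (G 0).det = lam ^ d := by simp [hGdef, hSdef]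
  have hpos : 0 < (1 + lam⁻¹ • S T).det := by
    linarith [hSlam.one_add_trace_le_det, hSlam.trace_nonneg]
  have htrS : (S T).trace ≤ T * K := by
    rw [hSdef, Matrix.trace_sum]
    simpa using Finset.sum_le_card_nsmul _ _ K htr
  have hbase : 1 + (lam⁻¹ • S T).trace ≤ (T + 1) * K / lam := by
    rw [Matrix.trace_smul, smul_eq_mul, inv_mul_eq_div, le_div_iff₀ hlam, add_mul,
      div_mul_cancel₀ _ hlam.ne']
    linarith
  have hratio : Real.log (G T).det - Real.log (G 0).det ≤ d * Real.log ((T + 1) * K / lam) := by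
    rw [hG0, hGT, Matrix.det_smul, Fintype.card_fin,
      Real.log_mul (pow_pos hlam d).ne' hpos.ne', add_sub_cancel_left, ← Real.log_pow]
    refine Real.log_le_log hpos (hSlam.det_one_add_le.trans ?_)
    rw [Fintype.card_fin]
    exact pow_le_pow_left₀ (by linarith [hSlam.trace_nonneg]) hbase d
  rw [← div_div, le_div_iff₀ hlog]
  calc _ ≤ K / lam * (Real.log (G T).det - Real.log (G 0).det) := hsum
    _ ≤ K / lam * (d * Real.log ((T + 1) * K / lam)) := mul_le_mul_of_nonneg_left hratio hc.le
    _ = _ := by ring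
end

section
/- Let (Z_t)_{t=1}^T be a sequence of random variables adapted to a filtration (F_t)_{t=1}^T on a probability space (with F_0 the trivial σ-algebra, or a given initial σ-algebra), and suppose Z_t ∈ [0,R] almost surely for all t, where R > 0. Then for any δ ∈ (0,1), with probability at least 1−δ, Σ_{t=1}^T E[Z_t | F_{t-1}] ≤ 2·Σ_{t=1}^T Z_t + 4R·log(1/δ). -/
open MeasureTheory
open scoped ENNReal

/-- On `[0, 1]`, `exp (-x)` is at most `1 - x / 2`. -/
lemma exp_neg_le_one_sub_half {x : ℝ} (hx0 : 0 ≤ x) (hx1 : x ≤ 1) :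
    Real.exp (-x) ≤ 1 - x / 2 := by
  have h : (Real.exp x)⁻¹ ≤ (x + 1)⁻¹ :=
    inv_anti₀ (by linarith) (Real.add_one_le_exp x)
  rw [Real.exp_neg]
  refine h.trans ?_
  rw [inv_le_iff_one_le_mul₀ (by linarith)]
  nlinarith

/-- The conditional expectation of a `[0, R]`-valued variable is `[0, R]`-valued. -/
lemma condExp_mem_Icc_of_ae_mem_Icc {Ω : Type*} {m m0 : MeasurableSpace Ω} {μ : Measure Ω}
    [IsFiniteMeasure μ] (hm : m ≤ m0) {R : ℝ} {Y : Ω → ℝ} (hY : Integrable Y μ)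
    (hbdd : ∀ᵐ ω ∂μ, Y ω ∈ Set.Icc (0 : ℝ) R) :
    ∀ᵐ ω ∂μ, (μ[Y | m]) ω ∈ Set.Icc (0 : ℝ) R := by
  have h0 : 0 ≤ᵐ[μ] μ[Y | m] := condExp_nonneg (hbdd.mono fun _ h => h.1)
  have h1 : μ[Y | m] ≤ᵐ[μ] μ[fun _ => R | m] :=
    condExp_mono hY (integrable_const R) (hbdd.mono fun _ h => h.2)
  rw [condExp_const hm] at h1
  filter_upwards [h0, h1] with ω h h' using ⟨h, h'⟩

/-- One step of the exponential supermartingale: multiplying a bounded nonnegative `m`-measurable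
weight by `exp (E[Y | m] / (4R) - Y / (2R))` does not increase its integral. -/
lemma integral_mul_exp_condExp_sub_le {Ω : Type*} {m m0 : MeasurableSpace Ω} {μ : Measure Ω}
    [IsFiniteMeasure μ] (hm : m ≤ m0) {R : ℝ} (hR : 0 < R) {Y W : Ω → ℝ}
    (hY : Measurable Y) (hbdd : ∀ᵐ ω ∂μ, Y ω ∈ Set.Icc (0 : ℝ) R)
    (hW : Measurable[m] W) (hW0 : ∀ ω, 0 ≤ W ω) {C : ℝ} (hWC : ∀ᵐ ω ∂μ, W ω ≤ C) :
    ∫ ω, W ω * Real.exp ((μ[Y | m]) ω / (4 * R) - Y ω / (2 * R)) ∂μ ≤ ∫ ω, W ω ∂μ := by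
  have hYint : Integrable Y μ := .of_bound hY.aestronglyMeasurable R <| by
    filter_upwards [hbdd] with ω h
    rw [Real.norm_of_nonneg h.1]
    exact h.2
  have hE := condExp_mem_Icc_of_ae_mem_Icc hm hYint hbdd
  have hEm : Measurable[m] (μ[Y | m]) := stronglyMeasurable_condExp.measurable
  set A : Ω → ℝ := fun ω => W ω * Real.exp ((μ[Y | m]) ω / (4 * R)) with hA
  have hAm : Measurable[m] A := hW.mul (Real.measurable_exp.comp (hEm.div_const _))
  have hA0 : ∀ ω, 0 ≤ A ω := fun ω => mul_nonneg (hW0 ω) (Real.exp_pos _).le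
  have hAC : ∀ᵐ ω ∂μ, ‖A ω‖ ≤ C * Real.exp 1 := by
    filter_upwards [hWC, hE] with ω hw he
    rw [Real.norm_of_nonneg (hA0 ω)]
    refine mul_le_mul hw (Real.exp_le_exp.2 ?_) (Real.exp_pos _).le ((hW0 ω).trans hw)
    rw [div_le_one (by linarith)]
    linarith [he.2]
  have hAint : Integrable A μ := .of_bound (hAm.mono hm le_rfl).aestronglyMeasurable _ hAC
  have hWint : Integrable W μ := .of_bound (hW.mono hm le_rfl).aestronglyMeasurable C <| by
    filter_upwards [hWC] with ω h
    rwa [Real.norm_of_nonneg (hW0 ω)]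
  have hAY : Integrable (A * Y) μ :=
    hYint.bdd_mul (hAm.mono hm le_rfl).aestronglyMeasurable hAC
  have hAE : Integrable (A * μ[Y | m]) μ :=
    integrable_condExp.bdd_mul (hAm.mono hm le_rfl).aestronglyMeasurable hAC
  have hpull : ∫ ω, (A * Y) ω ∂μ = ∫ ω, (A * μ[Y | m]) ω ∂μ := by
    rw [← integral_condExp hm]
    exact integral_congr_ae
      (condExp_mul_of_stronglyMeasurable_left hAm.stronglyMeasurable hAY hYint)
  calc ∫ ω, W ω * Real.exp ((μ[Y | m]) ω / (4 * R) - Y ω / (2 * R)) ∂μ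
      ≤ ∫ ω, (A ω - (4 * R)⁻¹ * (A * Y) ω) ∂μ := by
        refine integral_mono_of_nonneg (.of_forall fun ω => ?_)
          (hAint.sub (hAY.const_mul _)) ?_
        · exact mul_nonneg (hW0 ω) (Real.exp_pos _).le
        · filter_upwards [hbdd] with ω h
          have hx1 : Y ω / (2 * R) ≤ 1 := by
            rw [div_le_one (by linarith)]
            linarith [h.2]
          have key := mul_le_mul_of_nonneg_left
            (exp_neg_le_one_sub_half (div_nonneg h.1 (by linarith)) hx1) (hA0 ω)
          rw [sub_eq_add_neg, Real.exp_add, ← mul_assoc]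
          refine key.trans_eq ?_
          simp only [Pi.mul_apply]
          field_simp
          ring
    _ = ∫ ω, (A ω - (4 * R)⁻¹ * (A * μ[Y | m]) ω) ∂μ := by
        rw [integral_sub hAint (hAY.const_mul _), integral_sub hAint (hAE.const_mul _),
          integral_const_mul, integral_const_mul, hpull]
    _ ≤ ∫ ω, W ω ∂μ := by
        refine integral_mono (hAint.sub (hAE.const_mul _)) hWint fun ω => ?_
        set e := (μ[Y | m]) ω / (4 * R) with he
        have h1 : Real.exp e * (1 - e) ≤ 1 := by
          have := mul_le_mul_of_nonneg_left (Real.one_sub_le_exp_neg e) (Real.exp_pos e).le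
          rwa [← Real.exp_add, add_neg_cancel, Real.exp_zero] at this
        calc A ω - (4 * R)⁻¹ * (A * μ[Y | m]) ω = W ω * (Real.exp e * (1 - e)) := by
              simp only [Pi.mul_apply, hA, he]
              ring
          _ ≤ W ω := mul_le_of_le_one_right (hW0 ω) h1

/-- The exponential supermartingale attached to an adapted `[0, R]`-valued process has
expectation at most one. -/
lemma integral_exp_sum_condExp_sub_le_one {Ω : Type*} {m0 : MeasurableSpace Ω} {μ : Measure Ω}
    [IsProbabilityMeasure μ] {ℱ : Filtration ℕ m0} {R : ℝ} (hR : 0 < R) {Z : ℕ → Ω → ℝ}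
    (hadapted : Adapted ℱ Z) (hbdd : ∀ t, ∀ᵐ ω ∂μ, Z t ω ∈ Set.Icc (0 : ℝ) R) (n : ℕ) :
    Integrable (fun ω => Real.exp (∑ t ∈ Finset.Icc 1 n,
      ((μ[Z t | ℱ (t - 1)]) ω / (4 * R) - Z t ω / (2 * R)))) μ ∧
    ∫ ω, Real.exp (∑ t ∈ Finset.Icc 1 n,
      ((μ[Z t | ℱ (t - 1)]) ω / (4 * R) - Z t ω / (2 * R))) ∂μ ≤ 1 := by
  have hZm : ∀ t, Measurable (Z t) := fun t => (hadapted t).mono (ℱ.le t) le_rfl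
  have hmeas : ∀ k, Measurable[ℱ k] (fun ω => Real.exp (∑ t ∈ Finset.Icc 1 k,
      ((μ[Z t | ℱ (t - 1)]) ω / (4 * R) - Z t ω / (2 * R)))) := fun k => by
    refine Real.measurable_exp.comp (Finset.measurable_fun_sum _ fun t ht => ?_)
    have htk : t ≤ k := (Finset.mem_Icc.1 ht).2
    have hE : Measurable[ℱ k] (μ[Z t | ℱ (t - 1)]) :=
      stronglyMeasurable_condExp.measurable.mono (ℱ.mono (by omega)) le_rfl
    exact (hE.div_const _).sub (((hadapted t).mono (ℱ.mono htk) le_rfl).div_const _)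
  have hbound : ∀ k, ∀ᵐ ω ∂μ, Real.exp (∑ t ∈ Finset.Icc 1 k,
      ((μ[Z t | ℱ (t - 1)]) ω / (4 * R) - Z t ω / (2 * R))) ≤ Real.exp k := fun k => by
    have hE : ∀ t, ∀ᵐ ω ∂μ, (μ[Z t | ℱ (t - 1)]) ω ∈ Set.Icc (0 : ℝ) R := fun t => by
      refine condExp_mem_Icc_of_ae_mem_Icc (ℱ.le _)
        (.of_bound (hZm t).aestronglyMeasurable R ?_) (hbdd t)
      filter_upwards [hbdd t] with ω h
      rw [Real.norm_of_nonneg h.1]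
      exact h.2
    filter_upwards [ae_all_iff.2 hE, ae_all_iff.2 hbdd] with ω he hz
    refine Real.exp_le_exp.2 ((Finset.sum_le_card_nsmul _ _ 1 fun t _ => ?_).trans (by simp))
    have h1 : (μ[Z t | ℱ (t - 1)]) ω / (4 * R) ≤ 1 := by
      rw [div_le_one (by linarith)]
      linarith [(he t).2]
    have h2 : 0 ≤ Z t ω / (2 * R) := div_nonneg (hz t).1 (by linarith)
    linarith
  constructor
  · refine .of_bound ((hmeas n).mono (ℱ.le n) le_rfl).aestronglyMeasurable (Real.exp n) ?_
    filter_upwards [hbound n] with ω h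
    rwa [Real.norm_of_nonneg (Real.exp_pos _).le]
  · induction n with
    | zero => simp
    | succ k ih =>
      refine le_trans (le_of_eq_of_le ?_ (integral_mul_exp_condExp_sub_le (ℱ.le k) hR
        (hZm (k + 1)) (hbdd (k + 1)) (hmeas k) (fun _ => (Real.exp_pos _).le) (hbound k))) ih
      simp only [Finset.sum_Icc_succ_top (Nat.le_add_left 1 k), Real.exp_add,
        Nat.add_sub_cancel]

/-- Freedman-type corollary: for an adapted sequence of `[0,R]`-valued random variables,
with probability at least `1 - δ` the sum of conditional expectations is at most twice
the realized sum plus `4R log(1/δ)`. -/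
theorem sum_condexp_le_sum
    {Ω : Type} {m0 : MeasurableSpace Ω} (μ : Measure Ω) [IsProbabilityMeasure μ]
    (ℱ : Filtration ℕ m0) (T : ℕ) (R : ℝ) (hR : 0 < R)
    (Z : ℕ → Ω → ℝ) (hadapted : Adapted ℱ Z)
    (hbdd : ∀ t, ∀ᵐ ω ∂μ, Z t ω ∈ Set.Icc (0 : ℝ) R)
    (δ : ℝ) (hδ : δ ∈ Set.Ioo (0 : ℝ) 1) :
    ENNReal.ofReal (1 - δ) ≤
      μ {ω | ∑ t ∈ Finset.Icc 1 T, (μ[Z t | ℱ (t - 1)]) ω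
              ≤ 2 * ∑ t ∈ Finset.Icc 1 T, Z t ω + 4 * R * Real.log (1 / δ)} := by
  obtain ⟨hδ0, -⟩ := hδ
  obtain ⟨hint, hle⟩ := integral_exp_sum_condExp_sub_le_one hR hadapted hbdd T
  have hmarkov := mul_meas_ge_le_integral_of_nonneg
    (.of_forall fun _ => (Real.exp_pos _).le) hint (1 / δ)
  set B := {ω | 1 / δ ≤ Real.exp (∑ t ∈ Finset.Icc 1 T,
    ((μ[Z t | ℱ (t - 1)]) ω / (4 * R) - Z t ω / (2 * R)))}
  have hB : μ.real B ≤ δ := by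
    have := hmarkov.trans hle
    rwa [one_div, inv_mul_le_iff₀ hδ0, mul_one] at this
  set S := {ω | ∑ t ∈ Finset.Icc 1 T, (μ[Z t | ℱ (t - 1)]) ω
    ≤ 2 * ∑ t ∈ Finset.Icc 1 T, Z t ω + 4 * R * Real.log (1 / δ)}
  have hcover : Set.univ ⊆ S ∪ B := fun ω _ => by
    by_contra hω
    obtain ⟨hS, hB⟩ := not_or.1 hω
    refine hB ?_
    simp only [S, Set.mem_ofPred_eq, not_le] at hS
    simp only [B, Set.mem_ofPred_eq]
    rw [← Real.log_le_iff_le_exp (by positivity), Finset.sum_sub_distrib, ← Finset.sum_div,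
      ← Finset.sum_div, div_sub_div _ _ (by positivity) (by positivity),
      le_div_iff₀ (by positivity)]
    nlinarith
  have hone : 1 ≤ μ.real S + μ.real B :=
    calc (1 : ℝ) = μ.real Set.univ := by simp
      _ ≤ μ.real (S ∪ B) := measureReal_mono hcover
      _ ≤ μ.real S + μ.real B := measureReal_union_le S B
  exact ENNReal.ofReal_le_of_le_toReal (by rw [← measureReal_def]; linarith)
end

section
/- Let X be a prompt set with probability distribution μ and Y a finite response set. Let π_base be a conditional distribution with π_base(y|x) > 0 for all x, y, let y*(x) := argmax_{y∈Y} π_base(y|x) denote the set of maximizers, and let C_cov := E_{x∼μ}[1/π_base(y*(x)|x)]. For β > 0 define π*_β(y|x) := π_base(y|x)^{1+1/β} / Σ_{y'∈Y} π_base(y'|x)^{1+1/β}. Then: (i) E_{x∼μ, y∼π*_β(·|x)}[π*_β(y|x)/π_base(y|x)] ≤ C_cov; and (ii) E_{x∼μ, y∼π_base(·|x)}[(π_base(y|x)/π*_β(y|x))^β] ≤ |Y|. -/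
open MeasureTheory Finset
open scoped ENNReal Classical

/-- Pointwise form of the concentrability bound for the power tilt `p ^ (1 + s)`. -/
theorem sum_tilt_mul_tilt_div_le {Y : Type*} [Fintype Y] [Nonempty Y] {p : Y → ℝ}
    (hp : ∀ y, 0 < p y) {s : ℝ} (hs : 0 ≤ s) :
    ∑ y, (p y ^ (1 + s) / ∑ y', p y' ^ (1 + s)) *
        ((p y ^ (1 + s) / ∑ y', p y' ^ (1 + s)) / p y)
      ≤ 1 / ∑ y ∈ univ.filter (fun y => ∀ y', p y' ≤ p y), p y := by
  obtain ⟨m, hm⟩ := Finite.exists_max p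
  set Z := ∑ y', p y' ^ (1 + s) with hZ
  set F := univ.filter (fun y => ∀ y', p y' ≤ p y) with hF
  have hZpos : 0 < Z := sum_pos (fun y _ => Real.rpow_pos_of_pos (hp y) _) univ_nonempty
  have hmF : m ∈ F := by simpa [hF] using hm
  have hFpos : 0 < ∑ y ∈ F, p y := sum_pos (fun y _ => hp y) ⟨m, hmF⟩
  have hterm : ∀ y, (p y ^ (1 + s) / Z) * ((p y ^ (1 + s) / Z) / p y)
      ≤ p m ^ s / Z ^ 2 * p y ^ (1 + s) := by
    intro y
    have hsplit : p y ^ (1 + s) = p y * p y ^ s := by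
      rw [Real.rpow_add (hp y), Real.rpow_one]
    have hle : p y ^ s ≤ p m ^ s := Real.rpow_le_rpow (hp y).le (hm y) hs
    have hpy := hp y
    calc (p y ^ (1 + s) / Z) * ((p y ^ (1 + s) / Z) / p y)
        = p y ^ s / Z ^ 2 * p y ^ (1 + s) := by
          rw [hsplit]; field_simp
      _ ≤ _ := by gcongr
  have hmass : p m ^ s * ∑ y ∈ F, p y ≤ Z := by
    rw [mul_sum]
    refine (sum_le_sum fun y hy => ?_).trans
      (sum_le_sum_of_subset_of_nonneg (subset_univ F)
        fun y _ _ => (Real.rpow_pos_of_pos (hp y) (1 + s)).le)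
    have hmy : p m ≤ p y := (mem_filter.mp hy).2 m
    rw [le_antisymm hmy (hm y), Real.rpow_add (hp y), Real.rpow_one, mul_comm]
  calc _ ≤ ∑ y, p m ^ s / Z ^ 2 * p y ^ (1 + s) := sum_le_sum fun y _ => hterm y
    _ = p m ^ s / Z := by rw [← mul_sum, ← hZ]; field_simp
    _ ≤ _ := by rwa [div_le_div_iff₀ hZpos hFpos, one_mul]

/-- Pointwise form of the bound on the `β`-th moment of the inverse tilt. -/
theorem sum_mul_div_tilt_rpow_le_card {Y : Type*} [Fintype Y] {p : Y → ℝ}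
    (hp : ∀ y, 0 < p y) (hsum : ∑ y, p y = 1) {β : ℝ} (hβ : 0 < β) :
    ∑ y, p y * ((p y / (p y ^ (1 + 1 / β) / ∑ y', p y' ^ (1 + 1 / β))) ^ β)
      ≤ Fintype.card Y := by
  set Z := ∑ y', p y' ^ (1 + 1 / β) with hZ
  have hZ0 : 0 ≤ Z := sum_nonneg fun y _ => (Real.rpow_pos_of_pos (hp y) _).le
  have hZ1 : Z ≤ 1 := by
    rw [← hsum]
    refine sum_le_sum fun y _ => ?_
    have hy1 : p y ≤ 1 := hsum ▸ single_le_sum (fun y _ => (hp y).le) (mem_univ y)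
    have hexp : (1 : ℝ) ≤ 1 + 1 / β := le_add_of_nonneg_right (by positivity)
    simpa using Real.rpow_le_rpow_of_exponent_ge (hp y) hy1 hexp
  have hterm : ∀ y, p y * ((p y / (p y ^ (1 + 1 / β) / Z)) ^ β) = Z ^ β := by
    intro y
    have hpy := hp y
    have hroot : 0 < p y ^ (1 / β) := Real.rpow_pos_of_pos hpy _
    have hratio : p y / (p y ^ (1 + 1 / β) / Z) = Z / p y ^ (1 / β) := by
      rw [Real.rpow_add hpy, Real.rpow_one]; field_simp
    rw [hratio, Real.div_rpow hZ0 hroot.le, ← Real.rpow_mul hpy.le,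
      one_div_mul_cancel hβ.ne', Real.rpow_one, mul_div_cancel₀ _ hpy.ne']
  calc _ = ∑ _y : Y, Z ^ β := sum_congr rfl fun y _ => hterm y
    _ ≤ ∑ _y : Y, (1 : ℝ) := sum_le_sum fun _ _ => Real.rpow_le_one hZ0 hZ1 hβ.le
    _ = Fintype.card Y := by simp

/-- Coverage bounds for the KL-regularized optimal (power-tilted) model `π*_β`:
(i) its concentrability w.r.t. `π_base` is at most the coverage coefficient `C_cov`,
and (ii) `E_{π_base}[(π_base/π*_β)^β] ≤ |Y|`. -/
theorem tilted_model_concentrability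
    {X : Type} [MeasurableSpace X] (μ : Measure X) [IsProbabilityMeasure μ]
    {Y : Type} [Fintype Y] [Nonempty Y]
    (pb : X → Y → ℝ) (hpos : ∀ x y, 0 < pb x y) (hsum : ∀ x, ∑ y, pb x y = 1)
    (β : ℝ) (hβ : 0 < β) :
    (∫⁻ x, ENNReal.ofReal (∑ y,
        (pb x y ^ (1 + 1 / β) / ∑ y', pb x y' ^ (1 + 1 / β)) *
          ((pb x y ^ (1 + 1 / β) / ∑ y', pb x y' ^ (1 + 1 / β)) / pb x y)) ∂μ
      ≤ ∫⁻ x, ENNReal.ofReal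
          (1 / ∑ y ∈ univ.filter (fun y => ∀ y', pb x y' ≤ pb x y), pb x y) ∂μ)
    ∧
    (∫⁻ x, ENNReal.ofReal (∑ y, pb x y *
        ((pb x y / (pb x y ^ (1 + 1 / β) / ∑ y', pb x y' ^ (1 + 1 / β))) ^ β)) ∂μ
      ≤ (Fintype.card Y : ℝ≥0∞)) := by
  refine ⟨lintegral_mono fun x => ENNReal.ofReal_le_ofReal
    (sum_tilt_mul_tilt_div_le (hpos x) (by positivity)), ?_⟩
  calc _ ≤ ∫⁻ _, (Fintype.card Y : ℝ≥0∞) ∂μ := lintegral_mono fun x => by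
        simpa using ENNReal.ofReal_le_ofReal
          (sum_mul_div_tilt_rpow_le_card (hpos x) (hsum x) hβ)
    _ = Fintype.card Y := by simp
end

section
/- Let X be a prompt set with probability distribution μ and Y a finite response set. Let π_base and π be conditional distributions with π_base(y|x) > 0 and π(y|x) > 0 for all x, y, and let β ∈ (0,1]. Define C := E_{x∼μ, y∼π_base(·|x)}[(π_base(y|x)/π(y|x))^β]. Then for all s > 0, the probability over x ∼ μ and y, y' drawn i.i.d. from π_base(·|x) of the event |β·log(π(y|x)/π_base(y|x)) − β·log(π(y'|x)/π_base(y'|x))| > log(2C) + s is at most e^{−s}. -/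
open MeasureTheory Finset
open scoped ENNReal Classical

/-- Markov-type bound on the indicator of a large deviation between two scaled logarithms. -/
lemma indicator_lt_abs_log_sub_le {a b : ℝ} (ha : 0 < a) (hb : 0 < b) (β t : ℝ) :
    (if t < |β * Real.log a - β * Real.log b| then (1 : ℝ) else 0)
      ≤ Real.exp (-t) * (a ^ β * b⁻¹ ^ β + b ^ β * a⁻¹ ^ β) := by
  split_ifs with h
  · have key : Real.exp t ≤ a ^ β * b⁻¹ ^ β + b ^ β * a⁻¹ ^ β := by
      have e₁ : a ^ β * b⁻¹ ^ β = Real.exp (β * Real.log a - β * Real.log b) := by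
        rw [Real.rpow_def_of_pos ha, Real.rpow_def_of_pos (inv_pos.2 hb), ← Real.exp_add,
          Real.log_inv]
        ring_nf
      have e₂ : b ^ β * a⁻¹ ^ β = Real.exp (-(β * Real.log a - β * Real.log b)) := by
        rw [Real.rpow_def_of_pos hb, Real.rpow_def_of_pos (inv_pos.2 ha), ← Real.exp_add,
          Real.log_inv]
        ring_nf
      rw [e₁, e₂]
      exact (Real.exp_le_exp.2 h.le).trans (Real.exp_abs_le _)
    calc (1 : ℝ) = Real.exp (-t) * Real.exp t := by rw [← Real.exp_add]; simp
      _ ≤ _ := by gcongr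
  · positivity

/-- Jensen's inequality for the concave power `r ↦ r ^ β` of a density ratio. -/
lemma sum_mul_div_rpow_le_one {Y : Type*} [Fintype Y] {p q : Y → ℝ}
    (hp : ∀ y, 0 < p y) (hp1 : ∑ y, p y = 1) (hq : ∀ y, 0 < q y) (hq1 : ∑ y, q y = 1)
    {β : ℝ} (hβ : β ∈ Set.Ioc (0 : ℝ) 1) :
    ∑ y, p y * (q y / p y) ^ β ≤ 1 := by
  calc ∑ y, p y * (q y / p y) ^ β ≤ ∑ y, (p y + β * (q y - p y)) := by
        refine Finset.sum_le_sum fun y _ => ?_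
        have hr : 0 < q y / p y := div_pos (hq y) (hp y)
        have h := rpow_one_add_le_one_add_mul_self (s := q y / p y - 1) (by linarith)
          hβ.1.le hβ.2
        rw [add_sub_cancel] at h
        calc p y * (q y / p y) ^ β ≤ p y * (1 + β * (q y / p y - 1)) :=
              mul_le_mul_of_nonneg_left h (hp y).le
          _ = p y + β * (q y - p y) := by
              have := (hp y).ne'
              field_simp
    _ = 1 := by
        rw [Finset.sum_add_distrib, ← Finset.mul_sum, Finset.sum_sub_distrib, hp1, hq1]
        ring

/-- Tail bound for the centered log-ratio of two strictly positive finite distributions. -/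
lemma sum_sum_indicator_log_ratio_le {Y : Type*} [Fintype Y] {p q : Y → ℝ}
    (hp : ∀ y, 0 < p y) (hp1 : ∑ y, p y = 1) (hq : ∀ y, 0 < q y) (hq1 : ∑ y, q y = 1)
    {β : ℝ} (hβ : β ∈ Set.Ioc (0 : ℝ) 1) (t : ℝ) :
    ∑ y, ∑ y', p y * p y' *
        (if t < |β * Real.log (q y / p y) - β * Real.log (q y' / p y')| then (1 : ℝ) else 0)
      ≤ Real.exp (-t) * (2 * ∑ y, p y * (p y / q y) ^ β) := by
  have hV : 0 ≤ ∑ y, p y * (p y / q y) ^ β := Finset.sum_nonneg fun y _ => by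
    have := hp y
    have := hq y
    positivity
  calc _ ≤ ∑ y, ∑ y', p y * p y' * (Real.exp (-t) *
          ((q y / p y) ^ β * (p y' / q y') ^ β + (q y' / p y') ^ β * (p y / q y) ^ β)) := by
        refine Finset.sum_le_sum fun y _ => Finset.sum_le_sum fun y' _ => ?_
        have h := indicator_lt_abs_log_sub_le (div_pos (hq y) (hp y)) (div_pos (hq y') (hp y')) β t
        rw [inv_div, inv_div] at h
        exact mul_le_mul_of_nonneg_left h (mul_pos (hp y) (hp y')).le
    _ = Real.exp (-t) * (2 * ((∑ y, p y * (q y / p y) ^ β) * ∑ y, p y * (p y / q y) ^ β)) := by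
        rw [two_mul]
        nth_rewrite 2 [mul_comm (∑ y, p y * (q y / p y) ^ β)]
        rw [Finset.sum_mul_sum, Finset.sum_mul_sum, ← Finset.sum_add_distrib, Finset.mul_sum]
        refine Finset.sum_congr rfl fun y _ => ?_
        rw [← Finset.sum_add_distrib, Finset.mul_sum]
        refine Finset.sum_congr rfl fun y' _ => ?_
        ring
    _ ≤ _ := by
        have := mul_le_of_le_one_left hV (sum_mul_div_rpow_le_one hp hp1 hq hq1 hβ)
        gcongr

/-- Tail bound for the centered log-density-ratio statistic: for `β ∈ (0,1]` and
`C = E_{x,y∼π_base}[(π_base/π)^β]`, the probability (over `x ∼ μ` and `y,y'` i.i.d.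
from `π_base(·|x)`) that the absolute difference of the regularized log-ratios exceeds
`log(2C) + s` is at most `e^{-s}`. -/
theorem log_ratio_tail_bound
    {X : Type} [MeasurableSpace X] (μ : Measure X) [IsProbabilityMeasure μ]
    {Y : Type} [Fintype Y] [Nonempty Y]
    (pb : X → Y → ℝ) (hbpos : ∀ x y, 0 < pb x y) (hbsum : ∀ x, ∑ y, pb x y = 1)
    (hbmeas : ∀ y, Measurable fun x => pb x y)
    (pp : X → Y → ℝ) (hppos : ∀ x y, 0 < pp x y) (hpsum : ∀ x, ∑ y, pp x y = 1)
    (hpmeas : ∀ y, Measurable fun x => pp x y)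
    (β : ℝ) (hβ : β ∈ Set.Ioc (0 : ℝ) 1)
    (C : ℝ)
    (hC : C = ∫ x, ∑ y, pb x y * (pb x y / pp x y) ^ β ∂μ)
    (hCint : Integrable (fun x => ∑ y, pb x y * (pb x y / pp x y) ^ β) μ)
    (s : ℝ) (hs : 0 < s) :
    ∫⁻ x, ENNReal.ofReal (∑ y, ∑ y', pb x y * pb x y' *
        (if Real.log (2 * C) + s <
            |β * Real.log (pp x y / pb x y) - β * Real.log (pp x y' / pb x y')|
          then 1 else 0)) ∂μ
      ≤ ENNReal.ofReal (Real.exp (-s)) := by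
  have hpos : ∀ x, 0 < ∑ y, pb x y * (pb x y / pp x y) ^ β := fun x =>
    Finset.sum_pos (fun y _ => mul_pos (hbpos x y)
      (Real.rpow_pos_of_pos (div_pos (hbpos x y) (hppos x y)) _)) Finset.univ_nonempty
  have hCpos : 0 < C := by
    rw [hC, integral_pos_iff_support_of_nonneg (fun x => (hpos x).le) hCint,
      Function.support_eq_univ fun x => (hpos x).ne']
    simp
  calc _ ≤ ∫⁻ x, ENNReal.ofReal (Real.exp (-(Real.log (2 * C) + s)) *
          (2 * ∑ y, pb x y * (pb x y / pp x y) ^ β)) ∂μ :=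
        lintegral_mono fun x => ENNReal.ofReal_le_ofReal
          (sum_sum_indicator_log_ratio_le (hbpos x) (hbsum x) (hppos x) (hpsum x) hβ _)
    _ = ENNReal.ofReal (Real.exp (-(Real.log (2 * C) + s)) * (2 * C)) := by
        rw [← ofReal_integral_eq_lintegral_ofReal ((hCint.const_mul 2).const_mul _)
          (Filter.Eventually.of_forall fun x => by have := hpos x; positivity),
          integral_const_mul, integral_const_mul, ← hC]
    _ = ENNReal.ofReal (Real.exp (-s)) := by
        rw [neg_add, Real.exp_add, Real.exp_neg (Real.log _), Real.exp_log (by positivity)]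
        field_simp
end

section
/- There is an absolute constant c > 0 with the following property. Let X be a prompt set with probability distribution μ, Y a finite response set, π_base a conditional distribution with π_base(y|x) > 0 for all x, y, and β ∈ (0,1]. Define π*_β(y|x) ∝ π_base(y|x)^{1+1/β}, let π̂ be a model with π̂(y|x) > 0 everywhere, and set r*(x,y) := log π_base(y|x), r̂(x,y) := β·log(π̂(y|x)/π_base(y|x)), and Δ^r(x,y,y') := r(x,y) − r(x,y'). For a model π set C_π := E_{x∼μ, y∼π(·|x)}[π(y|x)/π_base(y|x)] and C^β(π_base‖π') := E_{x∼μ, y∼π_base(·|x)}[(π_base(y|x)/π'(y|x))^β]. Then for every model π and every η > 0: E_{x∼μ, y∼π(·|x), y'∼π_base(·|x)}[|Δ^{r*}(x,y,y') − Δ^{r̂}(x,y,y')|] ≤ c·C_π^{1/2}·(E_{x∼μ, y,y'∼π_base(·|x)}[(Δ^{r*}−Δ^{r̂})^2·1{|Δ^{r*}|≤η and |Δ^{r̂}|≤η}])^{1/2} + c·C_π^{1/2}·(1 + log C^β(π_base‖π̂) + log C^β(π_base‖π*_β))·(P_{x∼μ, y,y'∼π_base(·|x)}[|Δ^{r*}|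 > η] + P_{x∼μ, y,y'∼π_base(·|x)}[|Δ^{r̂}| > η])^{1/4}. -/
open MeasureTheory Finset
open scoped ENNReal Classical

/-- Cauchy–Schwarz for the weighted expectation `f ↦ ∫ ∑ i, q i * f i`. -/
lemma integral_sum_mul_mul_le_sqrt_mul_sqrt {X ι : Type*} [MeasurableSpace X] {μ : Measure X}
    [Fintype ι] {q f g : X → ι → ℝ} (hq : ∀ x i, 0 ≤ q x i) (hf : ∀ x i, 0 ≤ f x i)
    (hg : ∀ x i, 0 ≤ g x i) (hf2 : Integrable (fun x => ∑ i, q x i * f x i ^ 2) μ)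
    (hg2 : Integrable (fun x => ∑ i, q x i * g x i ^ 2) μ) :
    ∫ x, ∑ i, q x i * (f x i * g x i) ∂μ ≤
      √(∫ x, ∑ i, q x i * f x i ^ 2 ∂μ) * √(∫ x, ∑ i, q x i * g x i ^ 2 ∂μ) := by
  set a := ∫ x, ∑ i, q x i * f x i ^ 2 ∂μ with ha
  set b := ∫ x, ∑ i, q x i * g x i ^ 2 ∂μ with hb
  set e := ∫ x, ∑ i, q x i * (f x i * g x i) ∂μ with he
  have ha0 : 0 ≤ a := integral_nonneg fun x =>
    Finset.sum_nonneg fun i _ => mul_nonneg (hq x i) (sq_nonneg _)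
  have he0 : 0 ≤ e := integral_nonneg fun x =>
    Finset.sum_nonneg fun i _ => mul_nonneg (hq x i) (mul_nonneg (hf x i) (hg x i))
  have young : ∀ t : ℝ, 0 < t → 2 * t * e ≤ t ^ 2 * a + b := by
    intro t ht
    rw [ha, hb, he, ← integral_const_mul, ← integral_const_mul,
      ← integral_add (hf2.const_mul _) hg2]
    refine integral_mono_of_nonneg (.of_forall fun x => ?_) ((hf2.const_mul _).add hg2)
      (.of_forall fun x => ?_)
    · exact mul_nonneg (by positivity)
        (Finset.sum_nonneg fun i _ => mul_nonneg (hq x i) (mul_nonneg (hf x i) (hg x i)))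
    · simp only [Finset.mul_sum, ← Finset.sum_add_distrib]
      refine Finset.sum_le_sum fun i _ => ?_
      nlinarith [mul_nonneg (hq x i) (sq_nonneg (t * f x i - g x i))]
  have hdisc : discrim a (-(2 * e)) b ≤ 0 := by
    refine discrim_le_zero fun t => ?_
    rcases lt_or_ge 0 t with ht | ht
    · nlinarith [young t ht]
    · have hb0 : 0 ≤ b := integral_nonneg fun x =>
        Finset.sum_nonneg fun i _ => mul_nonneg (hq x i) (sq_nonneg _)
      nlinarith [mul_nonneg he0 (neg_nonneg.2 ht), mul_nonneg ha0 (sq_nonneg t)]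
  rw [← Real.sqrt_mul ha0]
  refine Real.le_sqrt_of_sq_le ?_
  unfold discrim at hdisc
  nlinarith

/-- A fourth power is controlled by exponentials centred at `log C`. -/
lemma pow_four_le_log_pow_four_add_exp {C : ℝ} (hC : 1 ≤ C) (a : ℝ) :
    a ^ 4 ≤ 8 * (Real.log C ^ 4 + 24 * ((Real.exp a + Real.exp (-a)) / C)) := by
  have hL : 0 ≤ Real.log C := Real.log_nonneg hC
  have hC0 : 0 < C := by linarith
  have hpos : 0 ≤ (Real.exp a + Real.exp (-a)) / C := by positivity
  have habs : Real.exp |a| ≤ Real.exp a + Real.exp (-a) := by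
    rcases abs_cases a with ⟨h, _⟩ | ⟨h, _⟩ <;> rw [h] <;> linarith [Real.exp_pos a,
      Real.exp_pos (-a)]
  have h4 : a ^ 4 = |a| ^ 4 := by rw [Even.pow_abs (by decide)]
  rw [h4]
  rcases le_total |a| (Real.log C) with h | h
  · have := pow_le_pow_left₀ (abs_nonneg a) h 4
    have := pow_nonneg hL 4
    linarith
  · obtain ⟨u, hu⟩ : ∃ u, u = |a| - Real.log C := ⟨_, rfl⟩
    have hu0 : 0 ≤ u := by linarith
    have hexp : u ^ 4 ≤ 24 * Real.exp u := by
      have := Real.pow_div_factorial_le_exp u hu0 4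
      norm_num [Nat.factorial] at this
      linarith
    have hexp' : Real.exp u ≤ (Real.exp a + Real.exp (-a)) / C := by
      rw [hu, Real.exp_sub, Real.exp_log hC0]
      gcongr
    have hsum : |a| = Real.log C + u := by linarith
    have hpow := add_pow_le hL hu0 4
    rw [hsum]
    norm_num at hpow
    linarith

/-- If `∫ ∑ pb * (pb / ph) ^ β` is finite, then it is at least one and its logarithm controls
the fourth moment of `β * log (ph / pb)`. -/
lemma fourth_moment_log_ratio {X Y : Type*} [MeasurableSpace X] {μ : Measure X}
    [IsProbabilityMeasure μ] [Fintype Y] {pb ph : X → Y → ℝ}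
    (hpb : ∀ x y, 0 < pb x y) (hpb1 : ∀ x, ∑ y, pb x y = 1)
    (hpbm : ∀ y, Measurable fun x => pb x y)
    (hph : ∀ x y, 0 < ph x y) (hph1 : ∀ x, ∑ y, ph x y = 1)
    (hphm : ∀ y, Measurable fun x => ph x y) {β : ℝ} (hβ : β ∈ Set.Ioc (0 : ℝ) 1)
    (hint : Integrable (fun x => ∑ y, pb x y * (pb x y / ph x y) ^ β) μ) :
    1 ≤ ∫ x, ∑ y, pb x y * (pb x y / ph x y) ^ β ∂μ ∧
    Integrable (fun x => ∑ y, pb x y * (β * Real.log (ph x y / pb x y)) ^ 4) μ ∧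
    ∫ x, ∑ y, pb x y * (β * Real.log (ph x y / pb x y)) ^ 4 ∂μ ≤
      8 * (Real.log (∫ x, ∑ y, pb x y * (pb x y / ph x y) ^ β ∂μ) ^ 4 + 72) := by
  obtain ⟨hβ0, hβ1⟩ := hβ
  set C := ∫ x, ∑ y, pb x y * (pb x y / ph x y) ^ β ∂μ with hC
  have hratio : ∀ x y, 0 < ph x y / pb x y := fun x y => div_pos (hph x y) (hpb x y)
  have hexp : ∀ x y, (pb x y / ph x y) ^ β = Real.exp (-(β * Real.log (ph x y / pb x y))) := by
    intro x y
    rw [Real.rpow_def_of_pos (div_pos (hpb x y) (hph x y)), ← inv_div, Real.log_inv]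
    ring_nf
  have hlower : ∀ x, 1 ≤ ∑ y, pb x y * (pb x y / ph x y) ^ β := by
    intro x
    have hterm : ∀ y, pb x y + β * (pb x y - ph x y) ≤ pb x y * (pb x y / ph x y) ^ β := by
      intro y
      have h1 := Real.add_one_le_exp (-(β * Real.log (ph x y / pb x y)))
      have h2 := mul_le_mul_of_nonneg_left (Real.log_le_sub_one_of_pos (hratio x y)) hβ0.le
      have h3 := mul_le_mul_of_nonneg_left
        (show 1 - β * (ph x y / pb x y - 1) ≤
          Real.exp (-(β * Real.log (ph x y / pb x y))) by linarith) (hpb x y).le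
      rw [hexp]
      refine le_trans (le_of_eq ?_) h3
      have := (hpb x y).ne'
      field_simp
      ring
    calc (1 : ℝ) = ∑ y, (pb x y + β * (pb x y - ph x y)) := by
          rw [Finset.sum_add_distrib, ← Finset.mul_sum, Finset.sum_sub_distrib, hpb1, hph1]
          ring
      _ ≤ _ := Finset.sum_le_sum fun y _ => hterm y
  have hC1 : 1 ≤ C := by
    have := integral_mono (integrable_const (μ := μ) (1 : ℝ)) hint hlower
    simpa using this
  have hC0 : 0 < C := by linarith
  have hupper : ∀ x y, Real.exp (β * Real.log (ph x y / pb x y)) ≤ 1 + ph x y / pb x y := by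
    intro x y
    have hr := hratio x y
    rcases le_total 0 (Real.log (ph x y / pb x y)) with h | h
    · have : Real.exp (β * Real.log (ph x y / pb x y)) ≤
          Real.exp (Real.log (ph x y / pb x y)) := Real.exp_le_exp.2 (by nlinarith)
      rw [Real.exp_log hr] at this
      linarith
    · have : Real.exp (β * Real.log (ph x y / pb x y)) ≤ 1 := Real.exp_le_one_iff.2 (by nlinarith)
      linarith
  set G : X → ℝ := fun x =>
    8 * Real.log C ^ 4 + 384 / C + 192 / C * ∑ y, pb x y * (pb x y / ph x y) ^ β with hG
  have hGint : Integrable G μ :=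
    (integrable_const _).add (hint.const_mul _)
  have hbound : ∀ x, ∑ y, pb x y * (β * Real.log (ph x y / pb x y)) ^ 4 ≤ G x := by
    intro x
    calc ∑ y, pb x y * (β * Real.log (ph x y / pb x y)) ^ 4
        ≤ ∑ y, (8 * Real.log C ^ 4 * pb x y + 192 / C *
            (pb x y + ph x y + pb x y * (pb x y / ph x y) ^ β)) := by
          refine Finset.sum_le_sum fun y _ => ?_
          have h1 := pow_four_le_log_pow_four_add_exp hC1 (β * Real.log (ph x y / pb x y))
          have h2 : (Real.exp (β * Real.log (ph x y / pb x y)) +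
              Real.exp (-(β * Real.log (ph x y / pb x y)))) / C ≤
              (1 + ph x y / pb x y + (pb x y / ph x y) ^ β) / C := by
            rw [hexp]
            gcongr
            exact hupper x y
          have h3 := mul_le_mul_of_nonneg_left (h1.trans (mul_le_mul_of_nonneg_left
            (add_le_add_right (mul_le_mul_of_nonneg_left h2 (by norm_num : (0 : ℝ) ≤ 24)) _)
            (by norm_num : (0 : ℝ) ≤ 8))) (hpb x y).le
          refine h3.trans (le_of_eq ?_)
          generalize (pb x y / ph x y) ^ β = w
          have := (hpb x y).ne'
          field_simp
          ring
      _ = G x := by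
          simp only [hG, Finset.sum_add_distrib, ← Finset.mul_sum, hpb1, hph1]
          ring
  have hnonneg : ∀ x, 0 ≤ ∑ y, pb x y * (β * Real.log (ph x y / pb x y)) ^ 4 := fun x =>
    Finset.sum_nonneg fun y _ => mul_nonneg (hpb x y).le (by positivity)
  have hI : Integrable (fun x => ∑ y, pb x y * (β * Real.log (ph x y / pb x y)) ^ 4) μ := by
    refine hGint.mono' (Measurable.aestronglyMeasurable (by fun_prop)) (.of_forall fun x => ?_)
    rw [Real.norm_of_nonneg (hnonneg x)]
    exact hbound x
  refine ⟨hC1, hI, (integral_mono hI hGint hbound).trans ?_⟩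
  rw [hG, integral_add (integrable_const _) (hint.const_mul _), integral_const_mul, ← hC]
  simp only [integral_const, probReal_univ, one_smul]
  have h1 : 192 / C * C = 192 := div_mul_cancel₀ _ hC0.ne'
  have h2 : 384 / C ≤ 384 := div_le_self (by norm_num) hC1
  linarith

/-- Pairing a probability vector with itself preserves expectations of functions of either
coordinate. -/
lemma sum_prod_mul_add {Y : Type*} [Fintype Y] {w : Y → ℝ} (hw : ∑ y, w y = 1) (f : Y → ℝ) :
    ∑ z : Y × Y, w z.1 * w z.2 * (f z.1 + f z.2) = 2 * ∑ y, w y * f y := by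
  have h1 : ∀ y, ∑ y', w y * w y' * (f y + f y') = w y * f y + w y * ∑ y', w y' * f y' := by
    intro y
    calc _ = w y * f y * ∑ y', w y' + w y * ∑ y', w y' * f y' := by
          rw [Finset.mul_sum, Finset.mul_sum, ← Finset.sum_add_distrib]
          exact Finset.sum_congr rfl fun _ _ => by ring
      _ = _ := by rw [hw, mul_one]
  rw [Fintype.sum_prod_type]
  simp only [h1]
  rw [Finset.sum_add_distrib, ← Finset.sum_mul, hw]
  ring


/-- Comparison lemma: the on-policy expected absolute reward-difference gap is controlled
by a truncated second-moment term plus a tail term, with an absolute constant `c`. -/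
theorem comparison_lemma :
    ∃ c : ℝ, 0 < c ∧
      ∀ (X : Type) [MeasurableSpace X] (μ : Measure X) [IsProbabilityMeasure μ]
        (Y : Type) [Fintype Y] [Nonempty Y]
        (pb : X → Y → ℝ), (∀ x y, 0 < pb x y) → (∀ x, ∑ y, pb x y = 1) →
        (∀ y, Measurable fun x => pb x y) →
        ∀ phat : X → Y → ℝ, (∀ x y, 0 < phat x y) → (∀ x, ∑ y, phat x y = 1) →
        (∀ y, Measurable fun x => phat x y) →
        ∀ p : X → Y → ℝ, (∀ x y, 0 ≤ p x y) → (∀ x, ∑ y, p x y = 1) →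
        (∀ y, Measurable fun x => p x y) →
        ∀ β : ℝ, β ∈ Set.Ioc (0 : ℝ) 1 →
        ∀ η : ℝ, 0 < η →
        let pstar : X → Y → ℝ := fun x y =>
          pb x y ^ (1 + 1 / β) / ∑ y', pb x y' ^ (1 + 1 / β)
        let rstar : X → Y → ℝ := fun x y => Real.log (pb x y)
        let rhat : X → Y → ℝ := fun x y => β * Real.log (phat x y / pb x y)
        let D : X → Y → Y → ℝ := fun x y y' =>
          (rstar x y - rstar x y') - (rhat x y - rhat x y')
        let Cp : ℝ := ∫ x, ∑ y, p x y * (p x y / pb x y) ∂μ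
        let CbHat : ℝ := ∫ x, ∑ y, pb x y * (pb x y / phat x y) ^ β ∂μ
        let CbStar : ℝ := ∫ x, ∑ y, pb x y * (pb x y / pstar x y) ^ β ∂μ
        let T2 : ℝ := ∫ x, ∑ y, ∑ y', pb x y * pb x y' *
            ((D x y y') ^ 2 *
              (if |rstar x y - rstar x y'| ≤ η ∧ |rhat x y - rhat x y'| ≤ η then 1 else 0)) ∂μ
        let Pstar : ℝ := ∫ x, ∑ y, ∑ y', pb x y * pb x y' *
            (if η < |rstar x y - rstar x y'| then 1 else 0) ∂μ
        let Phat : ℝ := ∫ x, ∑ y, ∑ y', pb x y * pb x y' *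
            (if η < |rhat x y - rhat x y'| then 1 else 0) ∂μ
        Integrable (fun x => ∑ y, ∑ y', p x y * pb x y' * |D x y y'|) μ →
        Integrable (fun x => ∑ y, p x y * (p x y / pb x y)) μ →
        Integrable (fun x => ∑ y, pb x y * (pb x y / phat x y) ^ β) μ →
        Integrable (fun x => ∑ y, pb x y * (pb x y / pstar x y) ^ β) μ →
        Integrable (fun x => ∑ y, ∑ y', pb x y * pb x y' *
            ((D x y y') ^ 2 *
              (if |rstar x y - rstar x y'| ≤ η ∧ |rhat x y - rhat x y'| ≤ η then 1 else 0))) μ →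
        (∫ x, ∑ y, ∑ y', p x y * pb x y' * |D x y y'| ∂μ)
          ≤ c * Real.sqrt Cp * Real.sqrt T2
            + c * Real.sqrt Cp * (1 + Real.log CbHat + Real.log CbStar) *
                (Pstar + Phat) ^ ((1 : ℝ) / 4) := by
  refine ⟨20, by norm_num, ?_⟩
  intro X _ μ _ Y _ _ pb hpb hpb1 hpbm ph hph hph1 hphm p hp hp1 hpm β hβ η hη
    pstar rstar rhat D Cp CbHat CbStar T2 Pstar Phat _ hCp hHat hStar hT2
  have hZ : ∀ x, 0 < ∑ y, pb x y ^ (1 + 1 / β) := fun x =>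
    Finset.sum_pos (fun y _ => Real.rpow_pos_of_pos (hpb x y) _) Finset.univ_nonempty
  have hps : ∀ x y, 0 < pstar x y := fun x y =>
    div_pos (Real.rpow_pos_of_pos (hpb x y) _) (hZ x)
  have hps1 : ∀ x, ∑ y, pstar x y = 1 := fun x => by
    simp only [pstar, ← Finset.sum_div]
    exact div_self (hZ x).ne'
  have hpsm : ∀ y, Measurable fun x => pstar x y := fun y => by
    simp only [pstar]
    fun_prop
  obtain ⟨hA1, hAint, hA⟩ := fourth_moment_log_ratio hpb hpb1 hpbm hph hph1 hphm hβ hHat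
  obtain ⟨hB1, hBint, hB⟩ := fourth_moment_log_ratio hpb hpb1 hpbm hps hps1 hpsm hβ hStar
  have hrstar : ∀ x y y', rstar x y - rstar x y' =
      β * Real.log (pstar x y / pb x y) - β * Real.log (pstar x y' / pb x y') := by
    have key : ∀ x y, β * Real.log (pstar x y / pb x y) =
        rstar x y - β * Real.log (∑ y', pb x y' ^ (1 + 1 / β)) := by
      intro x y
      have hβ0 : β ≠ 0 := hβ.1.ne'
      simp only [pstar, rstar]
      rw [Real.log_div (hps x y).ne' (hpb x y).ne',
        Real.log_div (Real.rpow_pos_of_pos (hpb x y) _).ne' (hZ x).ne',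
        Real.log_rpow (hpb x y)]
      field_simp
      ring
    intro x y y'
    rw [key, key]
    ring
  -- expectations are taken over pairs of independent base responses
  set q : X → Y × Y → ℝ := fun x z => pb x z.1 * pb x z.2 with hqdef
  have hq : ∀ x z, 0 ≤ q x z := fun x z => (mul_pos (hpb x _) (hpb x _)).le
  have hq1 : ∀ x, ∑ z, q x z = 1 := fun x => by
    simp only [hqdef, Fintype.sum_prod_type, ← Finset.mul_sum, hpb1, mul_one]
  have hqm : ∀ z, Measurable fun x => q x z := fun z => (hpbm _).mul (hpbm _)
  have hrsm : ∀ y y', Measurable fun x => rstar x y - rstar x y' := fun y y' =>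
    (hpbm y).log.sub (hpbm y').log
  have hrhm : ∀ y y', Measurable fun x => rhat x y - rhat x y' := fun y y' =>
    ((((hphm y).div (hpbm y)).log).const_mul β).sub ((((hphm y').div (hpbm y')).log).const_mul β)
  have hDm : ∀ y y', Measurable fun x => D x y y' := fun y y' => (hrsm y y').sub (hrhm y y')
  set bad : X → Y × Y → ℝ := fun x z =>
    if |rstar x z.1 - rstar x z.2| ≤ η ∧ |rhat x z.1 - rhat x z.2| ≤ η then 0 else 1 with hbad
  have hbadm : ∀ z, Measurable fun x => bad x z := fun z =>
    Measurable.ite ((measurableSet_le (hrsm z.1 z.2).norm measurable_const).inter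
      (measurableSet_le (hrhm z.1 z.2).norm measurable_const))
      measurable_const measurable_const
  have hbad0 : ∀ x z, 0 ≤ bad x z := fun x z => by simp only [hbad]; split_ifs <;> norm_num
  have hbad1 : ∀ x z, bad x z ≤ 1 := fun x z => by simp only [hbad]; split_ifs <;> norm_num
  have hbad2 : ∀ x z, bad x z ^ 2 = bad x z := fun x z => by
    simp only [hbad]; split_ifs <;> norm_num
  -- the fourth moment of `D`
  set L := 1 + Real.log CbHat + Real.log CbStar with hL
  have hLA : 0 ≤ Real.log CbHat := Real.log_nonneg hA1
  have hLB : 0 ≤ Real.log CbStar := Real.log_nonneg hB1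
  have hL0 : 0 ≤ L := by positivity
  have hD4le : ∀ x, ∑ z, q x z * (D x z.1 z.2 ^ 2) ^ 2 ≤
      128 * ∑ y, pb x y * (β * Real.log (ph x y / pb x y)) ^ 4 +
      128 * ∑ y, pb x y * (β * Real.log (pstar x y / pb x y)) ^ 4 := by
    intro x
    have hA := sum_prod_mul_add (hpb1 x) fun y => (β * Real.log (ph x y / pb x y)) ^ 4
    have hB := sum_prod_mul_add (hpb1 x) fun y => (β * Real.log (pstar x y / pb x y)) ^ 4
    calc _ ≤ ∑ z : Y × Y, (64 * (pb x z.1 * pb x z.2 * ((β * Real.log (ph x z.1 / pb x z.1)) ^ 4 +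
            (β * Real.log (ph x z.2 / pb x z.2)) ^ 4)) +
          64 * (pb x z.1 * pb x z.2 * ((β * Real.log (pstar x z.1 / pb x z.1)) ^ 4 +
            (β * Real.log (pstar x z.2 / pb x z.2)) ^ 4))) := by
          refine Finset.sum_le_sum fun z _ => ?_
          simp only [D, hrstar, rhat]
          generalize β * Real.log (ph x z.1 / pb x z.1) = a
          generalize β * Real.log (ph x z.2 / pb x z.2) = a'
          generalize β * Real.log (pstar x z.1 / pb x z.1) = b
          generalize β * Real.log (pstar x z.2 / pb x z.2) = b'
          have hpow : ((b - b' - (a - a')) ^ 2) ^ 2 ≤ 64 * (a ^ 4 + a' ^ 4 + (b ^ 4 + b' ^ 4)) := by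
            have h1 : (b - b' - (a - a')) ^ 2 ≤ 4 * (a ^ 2 + a' ^ 2 + (b ^ 2 + b' ^ 2)) := by
              nlinarith [sq_nonneg (a - a'), sq_nonneg (b + b'), sq_nonneg (a + a'),
                sq_nonneg (b - b' + (a - a'))]
            have h2 : (a ^ 2 + a' ^ 2 + (b ^ 2 + b' ^ 2)) ^ 2 ≤
                4 * (a ^ 4 + a' ^ 4 + (b ^ 4 + b' ^ 4)) := by
              nlinarith [sq_nonneg (a ^ 2 - a' ^ 2), sq_nonneg (b ^ 2 - b' ^ 2),
                sq_nonneg (a ^ 2 + a' ^ 2 - (b ^ 2 + b' ^ 2))]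
            have h3 := pow_le_pow_left₀ (sq_nonneg _) h1 2
            nlinarith
          have := mul_le_mul_of_nonneg_left hpow (hq x z)
          simp only [hqdef] at this ⊢
          linarith
      _ = _ := by
          rw [Finset.sum_add_distrib, ← Finset.mul_sum, ← Finset.mul_sum, hA, hB]
          ring
  have hD4nonneg : ∀ x, 0 ≤ ∑ z, q x z * (D x z.1 z.2 ^ 2) ^ 2 := fun x =>
    Finset.sum_nonneg fun z _ => mul_nonneg (hq x z) (sq_nonneg _)
  have hABint := (hAint.const_mul 128).add (hBint.const_mul 128)
  have hD4int : Integrable (fun x => ∑ z, q x z * (D x z.1 z.2 ^ 2) ^ 2) μ := by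
    refine hABint.mono' (Measurable.aestronglyMeasurable (by fun_prop)) (.of_forall fun x => ?_)
    rw [Real.norm_of_nonneg (hD4nonneg x)]
    exact hD4le x
  have hD4 : ∫ x, ∑ z, q x z * (D x z.1 z.2 ^ 2) ^ 2 ∂μ ≤ (20 * L) ^ 4 := by
    refine (integral_mono hD4int hABint hD4le).trans ?_
    rw [integral_add' (hAint.const_mul 128) (hBint.const_mul 128), integral_const_mul,
      integral_const_mul]
    have hLpow : 1 + Real.log CbHat ^ 4 + Real.log CbStar ^ 4 ≤ L ^ 4 := by
      have h1 := pow_add_pow_le hLA hLB (by norm_num : (4 : ℕ) ≠ 0)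
      have h2 := pow_add_pow_le zero_le_one (add_nonneg hLA hLB) (by norm_num : (4 : ℕ) ≠ 0)
      rw [hL, add_assoc 1]
      linarith
    have := pow_nonneg hLA 4
    have := pow_nonneg hLB 4
    rw [mul_pow]
    linarith
  -- the bad event
  have hPbadint : Integrable (fun x => ∑ z, q x z * bad x z ^ 2) μ := by
    refine (integrable_const (1 : ℝ)).mono' (Measurable.aestronglyMeasurable (by fun_prop))
      (.of_forall fun x => ?_)
    rw [Real.norm_of_nonneg (Finset.sum_nonneg fun z _ => mul_nonneg (hq x z) (sq_nonneg _)),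
      ← hq1 x]
    refine Finset.sum_le_sum fun z _ => ?_
    rw [hbad2]
    exact mul_le_of_le_one_right (hq x z) (hbad1 x z)
  have htail : ∀ r : X → Y → Y → ℝ, (∀ y y', Measurable fun x => r x y y') →
      Integrable (fun x => ∑ y, ∑ y', pb x y * pb x y' *
        (if η < |r x y y'| then (1 : ℝ) else 0)) μ := by
    intro r hr
    refine (integrable_const (1 : ℝ)).mono' (Measurable.aestronglyMeasurable ?_)
      (.of_forall fun x => ?_)
    · refine Finset.measurable_sum _ fun y _ => Finset.measurable_sum _ fun y' _ =>
        ((hpbm y).mul (hpbm y')).mul (Measurable.ite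
          (measurableSet_lt measurable_const (hr y y').norm)
          measurable_const measurable_const)
    · have hind : ∀ y y', (0 : ℝ) ≤ (if η < |r x y y'| then 1 else 0) ∧
          (if η < |r x y y'| then 1 else 0) ≤ (1 : ℝ) := fun y y' => by split_ifs <;> norm_num
      rw [Real.norm_of_nonneg (Finset.sum_nonneg fun y _ => Finset.sum_nonneg fun y' _ =>
        mul_nonneg (hq x (y, y')) (hind y y').1)]
      refine le_trans ?_ (hq1 x).le
      rw [Fintype.sum_prod_type]
      exact Finset.sum_le_sum fun y _ => Finset.sum_le_sum fun y' _ =>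
        mul_le_of_le_one_right (hq x (y, y')) (hind y y').2
  have hPbad : ∫ x, ∑ z, q x z * bad x z ^ 2 ∂μ ≤ Pstar + Phat := by
    have h1 := htail _ hrsm
    have h2 := htail _ hrhm
    simp only [Pstar, Phat]
    rw [← integral_add h1 h2]
    refine integral_mono hPbadint (h1.add h2) fun x => ?_
    simp only [Fintype.sum_prod_type, ← Finset.sum_add_distrib, ← mul_add]
    refine Finset.sum_le_sum fun y _ => Finset.sum_le_sum fun y' _ =>
      mul_le_mul_of_nonneg_left ?_ (hq x (y, y'))
    rw [hbad2]
    simp only [hbad]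
    split_ifs with h h₁ h₂ h₂ h₁ h₂ h₂ <;> try norm_num
    exact h ⟨not_lt.1 h₁, not_lt.1 h₂⟩
  have hbadterm : ∫ x, ∑ z, q x z * (D x z.1 z.2 ^ 2 * bad x z) ∂μ ≤
      (20 * L) ^ 2 * √(Pstar + Phat) := by
    refine (integral_sum_mul_mul_le_sqrt_mul_sqrt hq (fun x z => sq_nonneg _) hbad0 hD4int
      hPbadint).trans ?_
    refine mul_le_mul ((Real.sqrt_le_sqrt hD4).trans_eq ?_) (Real.sqrt_le_sqrt hPbad)
      (Real.sqrt_nonneg _) (sq_nonneg _)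
    rw [show (20 * L) ^ 4 = ((20 * L) ^ 2) ^ 2 by ring]
    exact Real.sqrt_sq (sq_nonneg _)
  -- the second moment of `D`
  have hbadint : Integrable (fun x => ∑ z, q x z * (D x z.1 z.2 ^ 2 * bad x z)) μ := by
    refine (hD4int.add hPbadint).mono' (Measurable.aestronglyMeasurable (by fun_prop))
      (.of_forall fun x => ?_)
    rw [Real.norm_of_nonneg (Finset.sum_nonneg fun z _ =>
      mul_nonneg (hq x z) (mul_nonneg (sq_nonneg _) (hbad0 x z)))]
    simp only [Pi.add_apply, ← Finset.sum_add_distrib, ← mul_add]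
    refine Finset.sum_le_sum fun z _ => mul_le_mul_of_nonneg_left ?_ (hq x z)
    nlinarith [sq_nonneg (D x z.1 z.2 ^ 2 - bad x z), sq_nonneg (D x z.1 z.2 ^ 2),
      sq_nonneg (bad x z)]
  have hsplit : (fun x => ∑ z, q x z * |D x z.1 z.2| ^ 2) =
      fun x => (∑ y, ∑ y', pb x y * pb x y' * ((D x y y') ^ 2 *
        (if |rstar x y - rstar x y'| ≤ η ∧ |rhat x y - rhat x y'| ≤ η then 1 else 0))) +
        ∑ z, q x z * (D x z.1 z.2 ^ 2 * bad x z) := by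
    funext x
    simp only [Fintype.sum_prod_type, ← Finset.sum_add_distrib]
    refine Finset.sum_congr rfl fun y _ => Finset.sum_congr rfl fun y' _ => ?_
    simp only [hbad, sq_abs]
    split_ifs <;> simp [hqdef]
  have hD2int : Integrable (fun x => ∑ z, q x z * |D x z.1 z.2| ^ 2) μ := by
    rw [hsplit]
    exact hT2.add hbadint
  have hD2 : ∫ x, ∑ z, q x z * |D x z.1 z.2| ^ 2 ∂μ ≤ T2 + (20 * L) ^ 2 * √(Pstar + Phat) := by
    rw [hsplit, integral_add hT2 hbadint]
    linarith
  -- the change of measure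
  have hCpeq : (fun x => ∑ y, p x y * (p x y / pb x y)) =
      fun x => ∑ z, q x z * (p x z.1 / pb x z.1) ^ 2 := by
    funext x
    rw [Fintype.sum_prod_type]
    refine Finset.sum_congr rfl fun y _ => ?_
    simp only [hqdef]
    rw [← Finset.sum_mul, ← Finset.mul_sum, hpb1]
    have := (hpb x y).ne'
    field_simp
  have hmain : (fun x => ∑ y, ∑ y', p x y * pb x y' * |D x y y'|) =
      fun x => ∑ z, q x z * (p x z.1 / pb x z.1 * |D x z.1 z.2|) := by
    funext x
    rw [Fintype.sum_prod_type]
    refine Finset.sum_congr rfl fun y _ => Finset.sum_congr rfl fun y' _ => ?_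
    simp only [hqdef]
    have := (hpb x y).ne'
    field_simp
  have hCpsq : Cp = ∫ x, ∑ z, q x z * (p x z.1 / pb x z.1) ^ 2 ∂μ := by
    simp only [Cp, hCpeq]
  rw [hCpeq] at hCp
  rw [hmain]
  have hCS := integral_sum_mul_mul_le_sqrt_mul_sqrt hq
    (fun x z => div_nonneg (hp x z.1) (hpb x z.1).le) (fun x z => abs_nonneg _) hCp hD2int
  rw [← hCpsq] at hCS
  have hP0 : 0 ≤ Pstar + Phat := (integral_nonneg fun x =>
    Finset.sum_nonneg fun z _ => mul_nonneg (hq x z) (sq_nonneg _)).trans hPbad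
  have hroot : √((20 * L) ^ 2 * √(Pstar + Phat)) = 20 * L * (Pstar + Phat) ^ ((1 : ℝ) / 4) := by
    rw [Real.sqrt_mul (sq_nonneg _), Real.sqrt_sq (by positivity), Real.sqrt_eq_rpow,
      Real.sqrt_eq_rpow, ← Real.rpow_mul hP0]
    norm_num
  have hfin : √(∫ x, ∑ z, q x z * |D x z.1 z.2| ^ 2 ∂μ) ≤
      √T2 + 20 * L * (Pstar + Phat) ^ ((1 : ℝ) / 4) := by
    rw [← hroot]
    refine (Real.sqrt_le_sqrt hD2).trans (Real.sqrt_le_iff.2 ⟨by positivity, ?_⟩)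
    rw [add_sq, Real.sq_sqrt', Real.sq_sqrt']
    have := mul_nonneg (Real.sqrt_nonneg T2) (Real.sqrt_nonneg ((20 * L) ^ 2 * √(Pstar + Phat)))
    linarith [le_max_left T2 0, le_max_left ((20 * L) ^ 2 * √(Pstar + Phat)) 0]
  have := hCS.trans (mul_le_mul_of_nonneg_left hfin (Real.sqrt_nonneg Cp))
  have := mul_nonneg (Real.sqrt_nonneg Cp) (Real.sqrt_nonneg T2)
  linarith
end

section
/- Let n ≥ 3 and consider the response space Y = [n]^2 (vocabulary [n], horizon 2). Define feature maps φ_1 : [n] → ℝ^2 and φ_2 : [n]^2 → ℝ^2 by φ_1(1) = φ_1(2) = e_1, φ_1(i) = e_2 for i ≥ 3, and φ_2(2,1) = e_1, φ_2(2,j) = e_2 for j ≠ 1, and φ_2(i,·) = 0 for i ≠ 2. For parameters θ = (θ_1, θ_2) ∈ ℝ^2 × ℝ^2 define the two-layer linear softmax model π_θ(y_1, y_2) := [exp(⟨φ_1(y_1), θ_1⟩)/Σ_{v∈[n]} exp(⟨φ_1(v), θ_1⟩)] · [exp(⟨φ_2(y_1, y_2), θ_2⟩)/Σ_{v∈[n]}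 exp(⟨φ_2(y_1, v), θ_2⟩)]. Let B := log n and θ* := (B·e_1, B·e_1). Then for all sufficiently large n: (i) (2,1) is the unique maximizer of (y_1,y_2) ↦ π_{θ*}(y_1,y_2) over [n]^2; and (ii) for every θ = (θ_1, θ_2) ∈ ℝ^2 × ℝ^2, π_θ(2,1) ≤ 1/2. In particular, no two-layer linear softmax model with these features (of any parameter norm) places probability greater than 1/2 on the sequence-level argmax of π_{θ*}. -/
open Finset

/-- Inner product on `ℝ × ℝ`. -/
noncomputable def ip2 (u v : ℝ × ℝ) : ℝ := u.1 * v.1 + u.2 * v.2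

/-- First-step feature map: tokens `1,2` (indices `0,1`) map to `e₁`, the rest to `e₂`. -/
noncomputable def phi1 (n : ℕ) (v : Fin n) : ℝ × ℝ := if (v : ℕ) < 2 then (1, 0) else (0, 1)

/-- Second-step feature map: `φ₂(2,1) = e₁`, `φ₂(2,j) = e₂` for `j ≠ 1`, and `φ₂(i,·) = 0`
for `i ≠ 2` (tokens `1,…,n` are represented by indices `0,…,n-1`). -/
noncomputable def phi2 (n : ℕ) (y1 y2 : Fin n) : ℝ × ℝ :=
  if (y1 : ℕ) = 1 then (if (y2 : ℕ) = 0 then (1, 0) else (0, 1)) else (0, 0)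

/-- Two-layer linear softmax model over `[n]²` with features `φ₁, φ₂`. -/
noncomputable def piSoftmax (n : ℕ) (θ : (ℝ × ℝ) × (ℝ × ℝ)) (y1 y2 : Fin n) : ℝ :=
  (Real.exp (ip2 (phi1 n y1) θ.1) / ∑ v, Real.exp (ip2 (phi1 n v) θ.1)) *
    (Real.exp (ip2 (phi2 n y1 y2) θ.2) / ∑ v, Real.exp (ip2 (phi2 n y1 v) θ.2))

/-- A softmax weight is at most `1 / 2` as soon as another index carries the same score. -/
lemma exp_div_sum_exp_le_half {ι : Type*} [Fintype ι] (f : ι → ℝ) {i j : ι}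
    (hij : i ≠ j) (hf : f i = f j) :
    Real.exp (f i) / ∑ v, Real.exp (f v) ≤ 1 / 2 := by
  classical
  have hpair : ∑ v ∈ {i, j}, Real.exp (f v) ≤ ∑ v, Real.exp (f v) :=
    Finset.sum_le_sum_of_subset_of_nonneg (Finset.subset_univ _)
      fun _ _ _ => (Real.exp_pos _).le
  rw [Finset.sum_pair hij, ← hf] at hpair
  have hpos := Real.exp_pos (f i)
  rw [div_le_div_iff₀ (by linarith) two_pos]
  linarith

/-- A softmax weight is at most `1`. -/
lemma exp_div_sum_exp_le_one {ι : Type*} [Fintype ι] (f : ι → ℝ) (i : ι) :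
    Real.exp (f i) / ∑ v, Real.exp (f v) ≤ 1 :=
  div_le_one_of_le₀
    (Finset.single_le_sum (f := fun v => Real.exp (f v))
      (fun _ _ => (Real.exp_pos _).le) (Finset.mem_univ i))
    (Finset.sum_nonneg fun _ _ => (Real.exp_pos _).le)

/-- With `θ₁ = (log n, 0)`, the two tokens with feature `e₁` maximize the first-step score. -/
lemma exp_phi1_le {n : ℕ} (hn : 0 < n) (v : Fin n) :
    Real.exp (ip2 (phi1 n v) (Real.log n, 0)) ≤ n := by
  have hn' : (1 : ℝ) ≤ n := by exact_mod_cast hn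
  unfold phi1 ip2
  split_ifs
  · simp [Real.exp_log (by linarith : (0 : ℝ) < n)]
  · simpa using hn'

/-- The second-step weights at `θ₂ = (log n, 0)`. -/
lemma exp_phi2 {n : ℕ} (hn : 0 < n) (y v : Fin n) :
    Real.exp (ip2 (phi2 n y v) (Real.log n, 0)) =
      if (y : ℕ) = 1 ∧ (v : ℕ) = 0 then (n : ℝ) else 1 := by
  have hn' : (0 : ℝ) < n := by exact_mod_cast hn
  unfold phi2 ip2
  split_ifs <;> simp_all [Real.exp_log]

/-- The second-step normalizer at `θ₂ = (log n, 0)`. -/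
lemma sum_exp_phi2 {n : ℕ} (hn : 0 < n) (y : Fin n) :
    ∑ v, Real.exp (ip2 (phi2 n y v) (Real.log n, 0)) =
      if (y : ℕ) = 1 then 2 * (n : ℝ) - 1 else n := by
  simp only [exp_phi2 hn]
  obtain ⟨m, rfl⟩ := Nat.exists_eq_succ_of_ne_zero hn.ne'
  split_ifs with h
  · simp only [h, true_and, Fin.sum_univ_succ]
    simp
    ring
  · simp [h]

/-- At `θ₂ = (log n, 0)`, the second-step probability is uniquely maximized at `(2, 1)`. -/
lemma second_step_lt {n : ℕ} (hn : 3 ≤ n) (y1 y2 : Fin n)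
    (h : ¬((y1 : ℕ) = 1 ∧ (y2 : ℕ) = 0)) :
    Real.exp (ip2 (phi2 n y1 y2) (Real.log n, 0)) /
        ∑ v, Real.exp (ip2 (phi2 n y1 v) (Real.log n, 0)) <
      Real.exp (ip2 (phi2 n ⟨1, by omega⟩ ⟨0, by omega⟩) (Real.log n, 0)) /
        ∑ v, Real.exp (ip2 (phi2 n ⟨1, by omega⟩ v) (Real.log n, 0)) := by
  have hn' : (3 : ℝ) ≤ n := by exact_mod_cast hn
  rw [sum_exp_phi2 (by omega), sum_exp_phi2 (by omega), exp_phi2 (by omega),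
    exp_phi2 (by omega), if_neg h]
  simp only [and_self, if_true]
  split_ifs
  · exact div_lt_div_of_pos_right (by linarith) (by linarith)
  · rw [div_lt_div_iff₀ (by linarith) (by linarith)]
    nlinarith

/-- For sufficiently large `n`: with `B = log n` and `θ* = (B·e₁, B·e₁)`, the sequence
`(2,1)` is the unique maximizer of `π_{θ*}`, yet every two-layer linear softmax model with
these features places probability at most `1/2` on `(2,1)`. -/
theorem softmax_representational_lower_bound :
    ∃ n0 : ℕ, ∀ n : ℕ, ∀ _hn3 : 3 ≤ n, ∀ _hn0 : n0 ≤ n,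
      (∀ y1 y2 : Fin n,
          (y1, y2) ≠ ((⟨1, by omega⟩ : Fin n), (⟨0, by omega⟩ : Fin n)) →
          piSoftmax n ((Real.log n, 0), (Real.log n, 0)) y1 y2
            < piSoftmax n ((Real.log n, 0), (Real.log n, 0)) ⟨1, by omega⟩ ⟨0, by omega⟩)
      ∧
      (∀ θ : (ℝ × ℝ) × (ℝ × ℝ),
          piSoftmax n θ ⟨1, by omega⟩ ⟨0, by omega⟩ ≤ 1 / 2) := by
  refine ⟨0, fun n hn _ => ⟨fun y1 y2 hy => ?_, fun θ => ?_⟩⟩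
  · have hpos : (0 : ℝ) < n := by exact_mod_cast (by omega : 0 < n)
    have hy' : ¬((y1 : ℕ) = 1 ∧ (y2 : ℕ) = 0) := fun h =>
      hy (Prod.ext (Fin.ext h.1) (Fin.ext h.2))
    have hsum : 0 < ∑ v, Real.exp (ip2 (phi1 n v) (Real.log n, 0)) :=
      Finset.sum_pos (fun _ _ => Real.exp_pos _) ⟨y1, Finset.mem_univ _⟩
    have hmax : Real.exp (ip2 (phi1 n ⟨1, by omega⟩) (Real.log n, 0)) = n := by
      simp [phi1, ip2, Real.exp_log hpos]
    refine mul_lt_mul' ?_ (second_step_lt hn y1 y2 hy') (by positivity)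
      (div_pos (Real.exp_pos _) hsum)
    exact div_le_div_of_nonneg_right ((exp_phi1_le (by omega) y1).trans_eq hmax.symm) hsum.le
  · have hfirst := exp_div_sum_exp_le_half (fun v => ip2 (phi1 n v) θ.1)
      (i := ⟨1, by omega⟩) (j := ⟨0, by omega⟩) (by simp) (by simp [phi1])
    have hsecond := exp_div_sum_exp_le_one (fun v => ip2 (phi2 n ⟨1, by omega⟩ v) θ.2)
      ⟨0, by omega⟩
    exact (mul_le_mul hfirst hsecond (by positivity) (by norm_num)).trans_eq (mul_one _)
end

section
/- Let X be a prompt set, Y a finite response set, d ∈ ℕ, and φ : X × Y → ℝ^d a feature map with ‖φ(x,y)‖_2 ≤ 1 for all x, y. For θ ∈ ℝ^d define the linear softmax model π_θ(y|x) := exp(⟨φ(x,y), θ⟩)/Σ_{y'∈Y} exp(⟨φ(x,y'), θ⟩). Then for any B > 0 and any ε with 0 < ε ≤ 2B, there exists a finite set Θ ⊆ {θ ∈ ℝ^d : ‖θ‖_2 ≤ B} with |Θ| ≤ (6B/ε)^d such that for every θ with ‖θ‖_2 ≤ B there is θ' ∈ Θ with sup_{x∈X} max_{y∈Y} |log(π_θ(y|x)/π_{θ'}(y|x))|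 ≤ ε. That is, the linear softmax model class {π_θ : ‖θ‖_2 ≤ B} admits an ε-net of size (6B/ε)^d in the sup-log-ratio metric. -/
open Finset
open scoped RealInnerProductSpace

section Packing

open MeasureTheory Module

variable {E : Type*} [NormedAddCommGroup E] [NormedSpace ℝ E] [FiniteDimensional ℝ E]

/-- Volumetric bound on the size of a `δ`-separated subset of the ball of radius `B`. -/
theorem card_le_of_separated_of_norm_le {B δ : ℝ} (hB : 0 ≤ B) (hδ : 0 < δ) (s : Finset E)
    (hs : ∀ c ∈ s, ‖c‖ ≤ B) (hsep : (s : Set E).Pairwise fun a b => δ ≤ ‖a - b‖) :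
    (s.card : ℝ) ≤ (1 + 2 * B / δ) ^ finrank ℝ E := by
  borelize E
  let μ : Measure E := Measure.addHaar
  have hr : 0 < δ / 2 := by positivity
  have hR : 0 < B + δ / 2 := by positivity
  have hdisj : (s : Set E).PairwiseDisjoint fun c => Metric.ball c (δ / 2) := by
    intro a ha b hb hab
    apply Metric.ball_disjoint_ball
    rw [dist_eq_norm, add_halves]
    exact hsep ha hb hab
  have hsub : (⋃ c ∈ s, Metric.ball c (δ / 2)) ⊆ Metric.ball (0 : E) (B + δ / 2) := by
    refine Set.iUnion₂_subset fun c hc => Metric.ball_subset_ball' ?_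
    rw [dist_zero_right]
    linarith [hs c hc]
  have hvol : (s.card : ENNReal) * ENNReal.ofReal ((δ / 2) ^ finrank ℝ E) * μ (Metric.ball 0 1) ≤
      ENNReal.ofReal ((B + δ / 2) ^ finrank ℝ E) * μ (Metric.ball 0 1) := by
    have h := measure_mono (μ := μ) hsub
    rw [measure_biUnion_finset hdisj fun c _ => measurableSet_ball] at h
    simpa only [μ.addHaar_ball_of_pos _ hr, μ.addHaar_ball_of_pos _ hR, Finset.sum_const,
      nsmul_eq_mul, mul_assoc] using h
  have hmul := ENNReal.toReal_le_of_le_ofReal (by positivity)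
    ((ENNReal.mul_le_mul_iff_left (Metric.measure_ball_pos μ _ zero_lt_one).ne'
      measure_ball_lt_top.ne).1 hvol)
  rw [ENNReal.toReal_mul, ENNReal.toReal_natCast, ENNReal.toReal_ofReal (by positivity),
    ← le_div_iff₀ (by positivity), ← div_pow] at hmul
  have hbase : (B + δ / 2) / (δ / 2) = 1 + 2 * B / δ := by
    field_simp
    ring
  rwa [hbase] at hmul

/-- The ball of radius `B` has a finite `δ`-net contained in it, of size `(1 + 2B/δ)^dim`. -/
theorem exists_finset_net_of_norm_le {B δ : ℝ} (hB : 0 ≤ B) (hδ : 0 < δ) :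
    ∃ s : Finset E, (∀ c ∈ s, ‖c‖ ≤ B) ∧ (s.card : ℝ) ≤ (1 + 2 * B / δ) ^ finrank ℝ E ∧
      ∀ x : E, ‖x‖ ≤ B → ∃ c ∈ s, ‖x - c‖ ≤ δ := by
  classical
  let S : Set ℕ := {n | ∃ s : Finset E, (∀ c ∈ s, ‖c‖ ≤ B) ∧
    ((s : Set E).Pairwise fun a b => δ ≤ ‖a - b‖) ∧ s.card = n}
  have hne : S.Nonempty := ⟨0, ∅, by simp⟩
  have hbdd : BddAbove S := by
    refine ⟨⌊(1 + 2 * B / δ) ^ finrank ℝ E⌋₊, ?_⟩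
    rintro n ⟨s, hs, hsep, rfl⟩
    exact Nat.le_floor (card_le_of_separated_of_norm_le hB hδ s hs hsep)
  obtain ⟨s, hs, hsep, hcard⟩ := Nat.sSup_mem hne hbdd
  refine ⟨s, hs, card_le_of_separated_of_norm_le hB hδ s hs hsep, fun x hx => ?_⟩
  by_contra! hfar
  have hxs : x ∉ s := fun h => by
    have := hfar x h
    simp only [sub_self, norm_zero] at this
    linarith
  have hmem : (insert x s).card ∈ S := by
    refine ⟨insert x s, ?_, ?_, rfl⟩
    · simpa using ⟨hx, hs⟩
    · rw [Finset.coe_insert]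
      refine hsep.insert fun b hb _ => ⟨(hfar b hb).le, ?_⟩
      rw [norm_sub_rev]
      exact (hfar b hb).le
  have hle := le_csSup hbdd hmem
  rw [Finset.card_insert_of_notMem hxs] at hle
  omega

end Packing

section Softmax

variable {Y : Type*} [Fintype Y] [Nonempty Y]

theorem log_sum_exp_le_add {f g : Y → ℝ} {r : ℝ} (h : ∀ y, f y ≤ g y + r) :
    Real.log (∑ y, Real.exp (f y)) ≤ Real.log (∑ y, Real.exp (g y)) + r := by
  have hpos : ∀ k : Y → ℝ, 0 < ∑ y, Real.exp (k y) := fun k =>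
    Finset.sum_pos (fun y _ => Real.exp_pos _) Finset.univ_nonempty
  rw [Real.log_le_iff_le_exp (hpos f), Real.exp_add, Real.exp_log (hpos g), Finset.sum_mul]
  gcongr with y
  rw [← Real.exp_add]
  exact Real.exp_le_exp.2 (h y)

theorem log_softmax (f : Y → ℝ) (y : Y) :
    Real.log (Real.exp (f y) / ∑ y', Real.exp (f y')) =
      f y - Real.log (∑ y', Real.exp (f y')) := by
  rw [Real.log_div (Real.exp_pos _).ne'
    (Finset.sum_pos (fun y _ => Real.exp_pos _) Finset.univ_nonempty).ne', Real.log_exp]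

/-- Softmax is `2`-Lipschitz from the sup metric on logits to the sup-log-ratio metric. -/
theorem abs_log_softmax_div_softmax_le {f g : Y → ℝ} {r : ℝ} (h : ∀ y, |f y - g y| ≤ r) (y : Y) :
    |Real.log ((Real.exp (f y) / ∑ y', Real.exp (f y')) /
      (Real.exp (g y) / ∑ y', Real.exp (g y')))| ≤ 2 * r := by
  have hpos : ∀ k : Y → ℝ, 0 < Real.exp (k y) / ∑ y', Real.exp (k y') := fun k =>
    div_pos (Real.exp_pos _) (Finset.sum_pos (fun y _ => Real.exp_pos _) Finset.univ_nonempty)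
  rw [Real.log_div (hpos f).ne' (hpos g).ne', log_softmax, log_softmax]
  have hfg := log_sum_exp_le_add (f := f) (g := g) fun y => by linarith [(abs_le.1 (h y)).2]
  have hgf := log_sum_exp_le_add (f := g) (g := f) fun y => by linarith [(abs_le.1 (h y)).1]
  have hy := abs_le.1 (h y)
  exact abs_le.2 ⟨by linarith, by linarith⟩

end Softmax

/-- The linear softmax model class `{π_θ : ‖θ‖ ≤ B}` admits an `ε`-net of size
`(6B/ε)^d` in the sup-log-ratio metric. -/
theorem softmax_class_covering
    {X : Type} {Y : Type} [Fintype Y] [Nonempty Y] (d : ℕ)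
    (φ : X → Y → EuclideanSpace ℝ (Fin d)) (hφ : ∀ x y, ‖φ x y‖ ≤ 1)
    (B : ℝ) (hB : 0 < B) (ε : ℝ) (hε : 0 < ε) (hε2 : ε ≤ 2 * B) :
    ∃ Θ : Finset (EuclideanSpace ℝ (Fin d)),
      (∀ θ' ∈ Θ, ‖θ'‖ ≤ B) ∧
      (Θ.card : ℝ) ≤ (6 * B / ε) ^ d ∧
      ∀ θ : EuclideanSpace ℝ (Fin d), ‖θ‖ ≤ B →
        ∃ θ' ∈ Θ, ∀ (x : X) (y : Y),
          |Real.log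
              ((Real.exp ⟪φ x y, θ⟫ / ∑ y'', Real.exp ⟪φ x y'', θ⟫) /
                (Real.exp ⟪φ x y, θ'⟫ / ∑ y'', Real.exp ⟪φ x y'', θ'⟫))| ≤ ε := by
  obtain ⟨Θ, hΘ, hcard, hnet⟩ :=
    exists_finset_net_of_norm_le (E := EuclideanSpace ℝ (Fin d)) hB.le (half_pos hε)
  refine ⟨Θ, hΘ, hcard.trans ?_, fun θ hθ => ?_⟩
  · rw [finrank_euclideanSpace_fin]
    gcongr
    rw [le_div_iff₀ hε]
    field_simp
    linarith
  · obtain ⟨θ', hθ', hdist⟩ := hnet θ hθ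
    refine ⟨θ', hθ', fun x y => ?_⟩
    have hlogit : ∀ y, |⟪φ x y, θ⟫ - ⟪φ x y, θ'⟫| ≤ ε / 2 := fun y => by
      rw [← inner_sub_right]
      calc |⟪φ x y, θ - θ'⟫| ≤ ‖φ x y‖ * ‖θ - θ'‖ := abs_real_inner_le_norm _ _
        _ ≤ 1 * (ε / 2) := by gcongr; exact hφ x y
        _ = ε / 2 := one_mul _
    exact (abs_log_softmax_div_softmax_le hlogit y).trans_eq (by ring)
end

section
/- There is an absolute constant c > 0 with the following property. Let X be a prompt set with probability distribution μ, Y a finite response set, d ∈ ℕ, φ : X × Y → ℝ^d a feature map with ‖φ(x,y)‖_2 ≤ 1, B ≥ 1, and let Π_{φ,B} := {π_θ : ‖θ‖_2 ≤ B} where π_θ(y|x) ∝ exp(⟨φ(x,y),θ⟩). Let r : X × Y → [−R_max, R_max] be a reward function, β > 0, T ∈ ℕ, and λ ≥ 4β²B² + R_max². Fix any reference model π* ∈ Π_{φ,B}, and for models π^{(1)},…,π^{(T)} ∈ Π_{φ,B} and each t, i ∈ [T] write g_t(x,y,y') := β·log(π^{(t)}(y|x)/π*(y|x)) − r(x,y)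 − β·log(π^{(t)}(y'|x)/π*(y'|x)) + r(x,y'), and let E^{(i)} denote expectation over x ∼ μ, y ∼ π^{(i)}(·|x), y' ∼ π*(·|x). Then for every choice of π^{(1)},…,π^{(T)} ∈ Π_{φ,B}: Σ_{t=1}^T (E^{(t)}[g_t(x,y,y')])² / (max(λ, Σ_{i=1}^{t-1} E^{(i)}[g_t(x,y,y')²])) ≤ c·d·log(T+1). In other words, the Sequential Extrapolation Coefficient SEC(Π_{φ,B}, r, T, β, λ; π*) is at most c·d·log(T+1). -/
open MeasureTheory Finset
open scoped RealInnerProductSpace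

open Matrix in
/-- The regularized Gram matrix `1 + ∑_{i < t} uᵢ uᵢᵀ` of a sequence of vectors. -/
noncomputable def regGram {ι : Type*} [DecidableEq ι] (u : ℕ → ι → ℝ) (t : ℕ) : Matrix ι ι ℝ :=
  1 + ∑ i ∈ Finset.range t, vecMulVec (u i) (u i)

section EllipticalPotential

open Matrix

lemma regGram_succ {ι : Type*} [DecidableEq ι] (u : ℕ → ι → ℝ) (t : ℕ) :
    regGram u (t + 1) = regGram u t + vecMulVec (u t) (u t) := by
  simp only [regGram, Finset.sum_range_succ, add_assoc]

variable {ι : Type*} [Fintype ι] [DecidableEq ι]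

lemma dotProduct_regGram_mulVec (u : ℕ → ι → ℝ) (t : ℕ) (z w : ι → ℝ) :
    z ⬝ᵥ regGram u t *ᵥ w = z ⬝ᵥ w + ∑ i ∈ Finset.range t, (u i ⬝ᵥ z) * (u i ⬝ᵥ w) := by
  rw [regGram, Matrix.add_mulVec, Matrix.one_mulVec, dotProduct_add, Matrix.sum_mulVec,
    dotProduct_sum]
  congr 1
  refine Finset.sum_congr rfl fun i _ => ?_
  rw [vecMulVec_mulVec, op_smul_eq_smul, dotProduct_smul, smul_eq_mul, mul_comm,
    dotProduct_comm z]

lemma dotProduct_self_le_regGram (u : ℕ → ι → ℝ) (t : ℕ) (w : ι → ℝ) :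
    w ⬝ᵥ w ≤ w ⬝ᵥ regGram u t *ᵥ w := by
  rw [dotProduct_regGram_mulVec]
  exact le_add_of_nonneg_right (Finset.sum_nonneg fun i _ => mul_self_nonneg _)

lemma regGram_posDef (u : ℕ → ι → ℝ) (t : ℕ) : (regGram u t).PosDef := by
  refine PosDef.of_dotProduct_mulVec_pos ?_ fun w hw => ?_
  · ext i j
    simp [regGram, Matrix.sum_apply, vecMulVec_apply, Matrix.one_apply, eq_comm, mul_comm]
  · rw [star_trivial]
    refine lt_of_lt_of_le ?_ (dotProduct_self_le_regGram u t w)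
    have h := dotProduct_star_self_pos_iff (v := w)
    rw [star_trivial] at h
    exact h.2 hw

lemma regGram_mulVec_inv_mulVec (u : ℕ → ι → ℝ) (t : ℕ) (v : ι → ℝ) :
    regGram u t *ᵥ ((regGram u t)⁻¹ *ᵥ v) = v := by
  rw [mulVec_mulVec, mul_nonsing_inv _ (regGram_posDef u t).det_pos.ne'.isUnit, one_mulVec]

/-- Cauchy–Schwarz for the dual pair of norms given by `regGram u t` and its inverse. -/
lemma dotProduct_sq_le_regGram (u : ℕ → ι → ℝ) (t : ℕ) (v w : ι → ℝ) :
    (v ⬝ᵥ w) ^ 2 ≤ (w ⬝ᵥ regGram u t *ᵥ w) * (v ⬝ᵥ (regGram u t)⁻¹ *ᵥ v) := by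
  set z := (regGram u t)⁻¹ *ᵥ v with hz
  have hMz : regGram u t *ᵥ z = v := regGram_mulVec_inv_mulVec u t v
  have hsymm : z ⬝ᵥ regGram u t *ᵥ w = w ⬝ᵥ v := by
    rw [← hMz, dotProduct_regGram_mulVec, dotProduct_regGram_mulVec, dotProduct_comm]
    simp only [mul_comm]
  have hquad : ∀ s : ℝ, 0 ≤ (v ⬝ᵥ z) * (s * s) + (-2 * (v ⬝ᵥ w)) * s
      + w ⬝ᵥ regGram u t *ᵥ w := by
    intro s
    have h := dotProduct_self_le_regGram u t (w - s • z)
    have h0 : 0 ≤ (w - s • z) ⬝ᵥ (w - s • z) :=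
      Finset.sum_nonneg fun i _ => mul_self_nonneg _
    have hexp : (w - s • z) ⬝ᵥ regGram u t *ᵥ (w - s • z) =
        (v ⬝ᵥ z) * (s * s) + (-2 * (v ⬝ᵥ w)) * s + w ⬝ᵥ regGram u t *ᵥ w := by
      rw [mulVec_sub, mulVec_smul, hMz, sub_dotProduct, dotProduct_sub, dotProduct_sub,
        smul_dotProduct, smul_dotProduct, dotProduct_smul, dotProduct_smul, hsymm,
        dotProduct_comm z v, dotProduct_comm w v]
      simp only [smul_eq_mul]
      ring
    linarith
  have := discrim_le_zero hquad
  rw [discrim] at this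
  linarith

lemma dotProduct_regGram_inv_nonneg (u : ℕ → ι → ℝ) (t : ℕ) (v : ι → ℝ) :
    0 ≤ v ⬝ᵥ (regGram u t)⁻¹ *ᵥ v := by
  have h := dotProduct_self_le_regGram u t ((regGram u t)⁻¹ *ᵥ v)
  rw [regGram_mulVec_inv_mulVec, dotProduct_comm _ v] at h
  exact (Finset.sum_nonneg fun i _ => mul_self_nonneg _).trans h

lemma dotProduct_regGram_inv_le (u : ℕ → ι → ℝ) (t : ℕ) (v : ι → ℝ) :
    v ⬝ᵥ (regGram u t)⁻¹ *ᵥ v ≤ v ⬝ᵥ v := by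
  set z := (regGram u t)⁻¹ *ᵥ v with hz
  have h := dotProduct_self_le_regGram u t z
  rw [hz, regGram_mulVec_inv_mulVec, ← hz, dotProduct_comm _ v] at h
  have h0 : 0 ≤ (v - z) ⬝ᵥ (v - z) := Finset.sum_nonneg fun i _ => mul_self_nonneg _
  rw [sub_dotProduct, dotProduct_sub, dotProduct_sub, dotProduct_comm z v] at h0
  linarith

lemma det_regGram_succ (u : ℕ → ι → ℝ) (t : ℕ) :
    (regGram u (t + 1)).det
      = (regGram u t).det * (1 + u t ⬝ᵥ (regGram u t)⁻¹ *ᵥ u t) := by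
  rw [regGram_succ, vecMulVec_eq Unit,
    det_add_replicateCol_mul_replicateRow (regGram_posDef u t).det_pos.ne'.isUnit,
    det_unique (n := Unit),
    Matrix.add_apply, Matrix.one_apply_eq, Matrix.mul_assoc, ← replicateCol_mulVec,
    replicateRow_mul_replicateCol_apply]

lemma log_det_regGram (u : ℕ → ι → ℝ) (T : ℕ) :
    Real.log (regGram u T).det
      = ∑ t ∈ Finset.range T, Real.log (1 + u t ⬝ᵥ (regGram u t)⁻¹ *ᵥ u t) := by
  induction T with
  | zero => simp [regGram]
  | succ t ih =>
    have h := dotProduct_regGram_inv_nonneg u t (u t)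
    rw [Finset.sum_range_succ, ← ih, det_regGram_succ,
      Real.log_mul (regGram_posDef u t).det_pos.ne' (by positivity)]

lemma log_det_regGram_le [Nonempty ι] (u : ℕ → ι → ℝ) (T : ℕ) (K : ℝ) (hK : 0 ≤ K)
    (hu : ∀ t, u t ⬝ᵥ u t ≤ K) :
    Real.log (regGram u T).det ≤ Fintype.card ι * Real.log (1 + K * T) := by
  have hpd := regGram_posDef u T
  have ha : 0 < 1 + K * T := by positivity
  have htr : ∑ i, hpd.isHermitian.eigenvalues i ≤ Fintype.card ι + K * T := by
    have h := hpd.isHermitian.trace_eq_sum_eigenvalues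
    simp only [RCLike.ofReal_real_eq_id, id] at h
    rw [← h, regGram, trace_add, trace_one, trace_sum]
    simp only [trace_vecMulVec]
    have := Finset.sum_le_card_nsmul (Finset.range T) (fun t => u t ⬝ᵥ u t) K fun t _ => hu t
    rw [Finset.card_range, nsmul_eq_mul] at this
    linarith
  have hdet := hpd.isHermitian.det_eq_prod_eigenvalues
  simp only [RCLike.ofReal_real_eq_id, id] at hdet
  rw [hdet, Real.log_prod fun i _ => (hpd.eigenvalues_pos i).ne']
  have hlog : ∀ i, Real.log (hpd.isHermitian.eigenvalues i)
      ≤ Real.log (1 + K * T) + hpd.isHermitian.eigenvalues i / (1 + K * T) - 1 := by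
    intro i
    have hpos := hpd.eigenvalues_pos i
    have h := Real.log_le_sub_one_of_pos (div_pos hpos ha)
    rw [Real.log_div hpos.ne' ha.ne'] at h
    linarith
  refine (Finset.sum_le_sum fun i _ => hlog i).trans ?_
  rw [Finset.sum_sub_distrib, Finset.sum_add_distrib, ← Finset.sum_div]
  simp only [Finset.sum_const, Finset.card_univ, nsmul_eq_mul, mul_one]
  have hn : (1 : ℝ) ≤ Fintype.card ι := by exact_mod_cast Fintype.card_pos
  have hKT : 0 ≤ K * T := by positivity
  have : (∑ i, hpd.isHermitian.eigenvalues i) / (1 + K * T) ≤ Fintype.card ι := by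
    rw [div_le_iff₀ ha]
    nlinarith
  linarith

/-- Sequential extrapolation bound for linear functionals: out-of-sample predictions are
controlled by past squared predictions up to a factor logarithmic in the horizon. -/
lemma sum_sq_dotProduct_div_le [Nonempty ι] (u w : ℕ → ι → ℝ) (T : ℕ)
    (hu : ∀ t, u t ⬝ᵥ u t ≤ 4) (hw : ∀ t, w t ⬝ᵥ w t ≤ 2) :
    ∑ t ∈ Finset.range T,
        (u t ⬝ᵥ w t) ^ 2 / max 1 (∑ i ∈ Finset.range t, (u i ⬝ᵥ w t) ^ 2)
      ≤ 9 * Fintype.card ι * Real.log (1 + 4 * T) := by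
  have hterm : ∀ t, (u t ⬝ᵥ w t) ^ 2 / max 1 (∑ i ∈ Finset.range t, (u i ⬝ᵥ w t) ^ 2)
      ≤ 9 * Real.log (1 + u t ⬝ᵥ (regGram u t)⁻¹ *ᵥ u t) := by
    intro t
    set S := ∑ i ∈ Finset.range t, (u i ⬝ᵥ w t) ^ 2 with hS
    set x := u t ⬝ᵥ (regGram u t)⁻¹ *ᵥ u t with hx
    have hx0 : 0 ≤ x := dotProduct_regGram_inv_nonneg u t (u t)
    have hx4 : x ≤ 4 := (dotProduct_regGram_inv_le u t (u t)).trans (hu t)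
    have hlog : x ≤ 3 * Real.log (1 + x) := by
      have h := Real.le_log_one_add_of_nonneg hx0
      have : x / 3 ≤ 2 * x / (x + 2) := by
        rw [div_le_div_iff₀ (by norm_num) (by positivity)]
        nlinarith
      linarith
    have hQ : w t ⬝ᵥ regGram u t *ᵥ w t ≤ 3 * max 1 S := by
      rw [dotProduct_regGram_mulVec]
      simp only [← pow_two, ← hS]
      linarith [hw t, le_max_left 1 S, le_max_right 1 S]
    have hm : 0 < max 1 S := lt_max_of_lt_left one_pos
    rw [div_le_iff₀ hm]
    calc (u t ⬝ᵥ w t) ^ 2 ≤ (w t ⬝ᵥ regGram u t *ᵥ w t) * x :=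
          dotProduct_sq_le_regGram u t (u t) (w t)
      _ ≤ (3 * max 1 S) * (3 * Real.log (1 + x)) := by gcongr
      _ = 9 * Real.log (1 + x) * max 1 S := by ring
  refine (Finset.sum_le_sum fun t _ => hterm t).trans ?_
  rw [← Finset.mul_sum, ← log_det_regGram, mul_assoc]
  exact mul_le_mul_of_nonneg_left (log_det_regGram_le u T 4 (by norm_num) hu) (by norm_num)

lemma sum_fin_sq_dotProduct_div_le [Nonempty ι] {T : ℕ} (u w : Fin T → ι → ℝ)
    (hu : ∀ t, u t ⬝ᵥ u t ≤ 4) (hw : ∀ t, w t ⬝ᵥ w t ≤ 2) :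
    ∑ t, (u t ⬝ᵥ w t) ^ 2 / max 1 (∑ i ∈ Finset.Iio t, (u i ⬝ᵥ w t) ^ 2)
      ≤ 9 * Fintype.card ι * Real.log (1 + 4 * T) := by
  let u' : ℕ → ι → ℝ := fun n => if h : n < T then u ⟨n, h⟩ else 0
  let w' : ℕ → ι → ℝ := fun n => if h : n < T then w ⟨n, h⟩ else 0
  have hu' : ∀ t : Fin T, u' t = u t := fun t => dif_pos t.isLt
  have hw' : ∀ t : Fin T, w' t = w t := fun t => dif_pos t.isLt
  have key := sum_sq_dotProduct_div_le u' w' T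
    (fun t => by by_cases h : t < T <;> simp [u', h, hu])
    (fun t => by by_cases h : t < T <;> simp [w', h, hw])
  rw [Finset.sum_range] at key
  refine le_of_eq_of_le (Finset.sum_congr rfl fun t _ => ?_) key
  rw [← Nat.Iio_eq_range, ← Fin.map_valEmbedding_Iio, Finset.sum_map]
  simp only [Fin.valEmbedding_apply, hu', hw']

end EllipticalPotential

section StochasticAverage

variable {X Z : Type*} [MeasurableSpace X] {μ : Measure X} [IsProbabilityMeasure μ] [Fintype Z]
  {F : Type*} [NormedAddCommGroup F] [NormedSpace ℝ F]

lemma norm_sum_smul_le_of_weights {p : Z → ℝ} (hp0 : ∀ z, 0 ≤ p z) (hp1 : ∑ z, p z = 1)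
    {f : Z → F} {C : ℝ} (hf : ∀ z, ‖f z‖ ≤ C) : ‖∑ z, p z • f z‖ ≤ C := by
  calc ‖∑ z, p z • f z‖ ≤ ∑ z, p z * C := by
        refine norm_sum_le_of_le _ fun z _ => ?_
        rw [norm_smul, Real.norm_of_nonneg (hp0 z)]
        exact mul_le_mul_of_nonneg_left (hf z) (hp0 z)
    _ = C := by rw [← Finset.sum_mul, hp1, one_mul]

lemma integrable_sum_smul_of_weights {p : X → Z → ℝ} (hpm : ∀ z, Measurable fun x => p x z)
    (hp0 : ∀ x z, 0 ≤ p x z) (hp1 : ∀ x, ∑ z, p x z = 1) {f : X → Z → F}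
    (hfm : ∀ z, StronglyMeasurable fun x => f x z) {C : ℝ} (hf : ∀ x z, ‖f x z‖ ≤ C) :
    Integrable (fun x => ∑ z, p x z • f x z) μ := by
  refine Integrable.of_bound (C := C) ?_
    (ae_of_all _ fun x => norm_sum_smul_le_of_weights (hp0 x) (hp1 x) (hf x))
  exact (Finset.stronglyMeasurable_fun_sum _ fun z _ =>
    (hpm z).stronglyMeasurable.smul (hfm z)).aestronglyMeasurable

lemma norm_integral_sum_smul_le_of_weights {p : X → Z → ℝ} (hp0 : ∀ x z, 0 ≤ p x z)
    (hp1 : ∀ x, ∑ z, p x z = 1) {f : X → Z → F} {C : ℝ} (hf : ∀ x z, ‖f x z‖ ≤ C) :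
    ‖∫ x, ∑ z, p x z • f x z ∂μ‖ ≤ C := by
  have h := norm_integral_le_of_norm_le_const (μ := μ)
    (ae_of_all _ fun x => norm_sum_smul_le_of_weights (hp0 x) (hp1 x) (hf x))
  simpa using h

lemma sq_integral_sum_mul_le_of_weights {p : X → Z → ℝ} (hpm : ∀ z, Measurable fun x => p x z)
    (hp0 : ∀ x z, 0 ≤ p x z) (hp1 : ∀ x, ∑ z, p x z = 1) {f : X → Z → ℝ}
    (hfm : ∀ z, Measurable fun x => f x z) {C : ℝ} (hf : ∀ x z, |f x z| ≤ C) :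
    (∫ x, ∑ z, p x z * f x z ∂μ) ^ 2 ≤ ∫ x, ∑ z, p x z * f x z ^ 2 ∂μ := by
  set m := ∫ x, ∑ z, p x z * f x z ∂μ with hm
  have hint : Integrable (fun x => ∑ z, p x z * f x z) μ :=
    integrable_sum_smul_of_weights hpm hp0 hp1 (fun z => (hfm z).stronglyMeasurable) hf
  have hint2 : Integrable (fun x => ∑ z, p x z * f x z ^ 2) μ := by
    refine integrable_sum_smul_of_weights hpm hp0 hp1 (C := C ^ 2)
      (fun z => ((hfm z).pow_const 2).stronglyMeasurable) fun x z => ?_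
    rw [Real.norm_eq_abs, abs_pow]
    exact pow_le_pow_left₀ (abs_nonneg _) (hf x z) 2
  have hnonneg : 0 ≤ ∫ x, ∑ z, p x z * (f x z - m) ^ 2 ∂μ :=
    integral_nonneg fun x => Finset.sum_nonneg fun z _ => mul_nonneg (hp0 x z) (sq_nonneg _)
  have hexp : ∀ x, ∑ z, p x z * (f x z - m) ^ 2
      = ∑ z, p x z * f x z ^ 2 - 2 * m * ∑ z, p x z * f x z + m ^ 2 := by
    intro x
    rw [Finset.mul_sum, ← Finset.sum_sub_distrib, ← mul_one (m ^ 2), ← hp1 x, Finset.mul_sum,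
      ← Finset.sum_add_distrib]
    exact Finset.sum_congr rfl fun z _ => by ring
  simp only [hexp] at hnonneg
  have hsub : Integrable (fun x => ∑ z, p x z * f x z ^ 2 - 2 * m * ∑ z, p x z * f x z) μ :=
    hint2.sub (hint.const_mul _)
  rw [integral_add hsub (integrable_const _),
    integral_sub hint2 (hint.const_mul _), integral_const_mul, ← hm, integral_const] at hnonneg
  simp only [probReal_univ, one_smul] at hnonneg
  linarith

end StochasticAverage

open Matrix in
/-- Sequential extrapolation bound for affine functions of `d`-dimensional features, averaged
under an arbitrary sequence of stochastic weights. -/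
lemma sum_sq_average_div_le {X Z : Type*} [MeasurableSpace X] {μ : Measure X}
    [IsProbabilityMeasure μ] [Fintype Z] {d T : ℕ} {p : Fin T → X → Z → ℝ}
    (hpm : ∀ i z, Measurable fun x => p i x z) (hp0 : ∀ i x z, 0 ≤ p i x z)
    (hp1 : ∀ i x, ∑ z, p i x z = 1) {ψ : X → Z → EuclideanSpace ℝ (Fin d)}
    (hψm : ∀ z, Measurable fun x => ψ x z) (hψ : ∀ x z, ‖ψ x z‖ ≤ 2) {ρ : X → Z → ℝ} {R : ℝ}
    (hρm : ∀ z, Measurable fun x => ρ x z) (hρ : ∀ x z, |ρ x z| ≤ 2 * R) {β B lam : ℝ}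
    (hβ : 0 < β) (hB : 0 < B) (hlam : 4 * β ^ 2 * B ^ 2 + R ^ 2 ≤ lam)
    {δ : Fin T → EuclideanSpace ℝ (Fin d)} (hδ : ∀ t, ‖δ t‖ ≤ 2 * B) :
    ∑ t, (∫ x, ∑ z, p t x z * (β * ⟪ψ x z, δ t⟫ - ρ x z) ∂μ) ^ 2
        / max lam (∑ i ∈ Finset.Iio t,
            ∫ x, ∑ z, p i x z * (β * ⟪ψ x z, δ t⟫ - ρ x z) ^ 2 ∂μ)
      ≤ 9 * (d + 1) * Real.log (1 + 4 * T) := by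
  have hlam0 : 0 < lam := lt_of_lt_of_le (by positivity) hlam
  have hL : 0 < √lam := Real.sqrt_pos.2 hlam0
  have hL2 : √lam ^ 2 = lam := Real.sq_sqrt hlam0.le
  let v : Fin T → EuclideanSpace ℝ (Fin d) := fun i => ∫ x, ∑ z, p i x z • ψ x z ∂μ
  let s : Fin T → ℝ := fun i => ∫ x, ∑ z, p i x z * ρ x z ∂μ
  have hv : ∀ i, ‖v i‖ ≤ 2 := fun i => norm_integral_sum_smul_le_of_weights (hp0 i) (hp1 i) hψ
  have hs : ∀ i, |s i| ≤ 2 * R := fun i =>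
    norm_integral_sum_smul_le_of_weights (hp0 i) (hp1 i) (F := ℝ) (f := ρ) hρ
  let u : Fin T → Fin d ⊕ Unit → ℝ := fun i =>
    (√lam)⁻¹ • Sum.elim ((2 * β * B) • (v i).ofLp) fun _ => s i
  let w : Fin T → Fin d ⊕ Unit → ℝ := fun t =>
    Sum.elim ((2 * B)⁻¹ • (δ t).ofLp) fun _ => -1
  have hself : ∀ a : EuclideanSpace ℝ (Fin d), a.ofLp ⬝ᵥ a.ofLp = ‖a‖ ^ 2 := by
    intro a
    rw [EuclideanSpace.real_norm_sq_eq]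
    exact Finset.sum_congr rfl fun i _ => (pow_two _).symm
  have hu : ∀ t, u t ⬝ᵥ u t ≤ 4 := by
    intro t
    have h1 : u t ⬝ᵥ u t = (4 * β ^ 2 * B ^ 2 * ‖v t‖ ^ 2 + s t ^ 2) / √lam ^ 2 := by
      simp only [u, smul_dotProduct, dotProduct_smul, sumElim_dotProduct_sumElim,
        smul_eq_mul]
      rw [hself]
      simp only [dotProduct, Finset.univ_unique, Finset.sum_singleton]
      field_simp
      ring
    rw [h1, hL2, div_le_iff₀ hlam0]
    have h2 : ‖v t‖ ^ 2 ≤ 2 ^ 2 := pow_le_pow_left₀ (norm_nonneg _) (hv t) 2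
    have h3 : s t ^ 2 ≤ (2 * R) ^ 2 := sq_le_sq' (abs_le.1 (hs t)).1 (abs_le.1 (hs t)).2
    have h4 : 4 * β ^ 2 * B ^ 2 * ‖v t‖ ^ 2 ≤ 4 * β ^ 2 * B ^ 2 * 2 ^ 2 := by gcongr
    linarith
  have hw : ∀ t, w t ⬝ᵥ w t ≤ 2 := by
    intro t
    have h1 : w t ⬝ᵥ w t = ‖δ t‖ ^ 2 / (2 * B) ^ 2 + 1 := by
      simp only [w, sumElim_dotProduct_sumElim, smul_dotProduct, dotProduct_smul, smul_eq_mul]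
      rw [hself]
      simp only [dotProduct, Finset.univ_unique, Finset.sum_singleton]
      field_simp
    have h2 : ‖δ t‖ ^ 2 / (2 * B) ^ 2 ≤ 1 := by
      rw [div_le_one (by positivity)]
      exact pow_le_pow_left₀ (norm_nonneg _) (hδ t) 2
    linarith
  have hGm : ∀ t z, Measurable fun x => β * ⟪ψ x z, δ t⟫ - ρ x z := fun t z =>
    (((hψm z).inner measurable_const).const_mul β).sub (hρm z)
  have hGb : ∀ t x z, |β * ⟪ψ x z, δ t⟫ - ρ x z| ≤ β * (2 * (2 * B)) + 2 * R := by
    intro t x z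
    refine (abs_sub _ _).trans (add_le_add ?_ (hρ x z))
    rw [abs_mul, abs_of_pos hβ]
    refine mul_le_mul_of_nonneg_left ?_ hβ.le
    exact (abs_real_inner_le_norm _ _).trans
      (mul_le_mul (hψ x z) (hδ t) (norm_nonneg _) (by norm_num))
  have havg : ∀ i t, ∫ x, ∑ z, p i x z * (β * ⟪ψ x z, δ t⟫ - ρ x z) ∂μ
      = √lam * (u i ⬝ᵥ w t) := by
    intro i t
    have hiv : Integrable (fun x => ∑ z, p i x z • ψ x z) μ :=
      integrable_sum_smul_of_weights (hpm i) (hp0 i) (hp1 i)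
        (fun z => (hψm z).stronglyMeasurable) hψ
    have his : Integrable (fun x => ∑ z, p i x z * ρ x z) μ :=
      integrable_sum_smul_of_weights (hpm i) (hp0 i) (hp1 i)
        (fun z => (hρm z).stronglyMeasurable) hρ
    have h1 : ∀ x, ∑ z, p i x z * (β * ⟪ψ x z, δ t⟫ - ρ x z)
        = β * ⟪δ t, ∑ z, p i x z • ψ x z⟫ - ∑ z, p i x z * ρ x z := by
      intro x
      rw [inner_sum, Finset.mul_sum, ← Finset.sum_sub_distrib]
      refine Finset.sum_congr rfl fun z _ => ?_
      rw [real_inner_smul_right, real_inner_comm]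
      ring
    simp only [h1]
    rw [integral_sub ((hiv.const_inner (𝕜 := ℝ) (δ t)).const_mul β) his, integral_const_mul,
      integral_inner hiv]
    change β * ⟪δ t, v i⟫ - s i = _
    simp only [u, w, smul_dotProduct, dotProduct_smul, sumElim_dotProduct_sumElim, smul_eq_mul]
    rw [EuclideanSpace.inner_eq_star_dotProduct, star_trivial]
    simp only [dotProduct, Finset.univ_unique, Finset.sum_singleton]
    field_simp
    ring
  have key := sum_fin_sq_dotProduct_div_le u w hu hw
  rw [Fintype.card_sum, Fintype.card_fin, Fintype.card_unit, Nat.cast_add, Nat.cast_one] at key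
  refine (Finset.sum_le_sum fun t _ => ?_).trans key
  have hden : lam * max 1 (∑ i ∈ Finset.Iio t, (u i ⬝ᵥ w t) ^ 2)
      ≤ max lam (∑ i ∈ Finset.Iio t,
          ∫ x, ∑ z, p i x z * (β * ⟪ψ x z, δ t⟫ - ρ x z) ^ 2 ∂μ) := by
    rw [mul_max_of_nonneg _ _ hlam0.le, mul_one, Finset.mul_sum]
    refine max_le_max le_rfl (Finset.sum_le_sum fun i _ => ?_)
    have h := sq_integral_sum_mul_le_of_weights (μ := μ) (hpm i) (hp0 i) (hp1 i) (hGm t) (hGb t)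
    rwa [havg, mul_pow, hL2] at h
  have hmax : 0 < max 1 (∑ i ∈ Finset.Iio t, (u i ⬝ᵥ w t) ^ 2) := lt_max_of_lt_left one_pos
  rw [havg, mul_pow, hL2]
  calc lam * (u t ⬝ᵥ w t) ^ 2 / _
      ≤ lam * (u t ⬝ᵥ w t) ^ 2 / (lam * max 1 (∑ i ∈ Finset.Iio t, (u i ⬝ᵥ w t) ^ 2)) := by
        gcongr
    _ = _ := mul_div_mul_left _ _ hlam0.ne'

section Softmax

variable {Y F : Type*} [Fintype Y] [Nonempty Y] [NormedAddCommGroup F] [InnerProductSpace ℝ F]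

lemma sum_exp_inner_pos (φ : Y → F) (θ : F) : 0 < ∑ y, Real.exp ⟪φ y, θ⟫ :=
  Finset.sum_pos (fun _ _ => Real.exp_pos _) Finset.univ_nonempty

lemma log_softmax_ratio (φ : Y → F) (θ θ' : F) (y : Y) :
    Real.log (Real.exp ⟪φ y, θ⟫ / (∑ z, Real.exp ⟪φ z, θ⟫)
        / (Real.exp ⟪φ y, θ'⟫ / ∑ z, Real.exp ⟪φ z, θ'⟫))
      = ⟪φ y, θ - θ'⟫ - Real.log (∑ z, Real.exp ⟪φ z, θ⟫)
        + Real.log (∑ z, Real.exp ⟪φ z, θ'⟫) := by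
  have h := (sum_exp_inner_pos φ θ).ne'
  have h' := (sum_exp_inner_pos φ θ').ne'
  rw [Real.log_div (div_ne_zero (Real.exp_ne_zero _) h) (div_ne_zero (Real.exp_ne_zero _) h'),
    Real.log_div (Real.exp_ne_zero _) h, Real.log_div (Real.exp_ne_zero _) h', Real.log_exp,
    Real.log_exp, inner_sub_right]
  ring

end Softmax

lemma log_one_add_four_mul_le (T : ℕ) :
    Real.log (1 + 4 * T) ≤ 3 * Real.log (T + 1) := by
  have h : (1 + 4 * T : ℝ) ≤ (T + 1) ^ 3 := by
    have : 1 + 4 * T ≤ (T + 1) ^ 3 := by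
      have h1 : T ≤ T * T := Nat.le_mul_self T
      nlinarith [Nat.zero_le (T * T * T)]
    exact_mod_cast this
  calc Real.log (1 + 4 * T) ≤ Real.log ((T + 1) ^ 3) := Real.log_le_log (by positivity) h
    _ = 3 * Real.log (T + 1) := by rw [Real.log_pow]; norm_num

/-- The Sequential Extrapolation Coefficient of the linear softmax class `Π_{φ,B}`
(with reward `r`, horizon `T`, regularization `β`, threshold `λ ≥ 4β²B² + R²_max`,
and reference model `π* ∈ Π_{φ,B}`) is at most `c·d·log(T+1)` for an absolute
constant `c > 0`. -/
theorem sec_linear_softmax_bound :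
    ∃ c : ℝ, 0 < c ∧
      ∀ (X : Type) [MeasurableSpace X] (μ : Measure X) [IsProbabilityMeasure μ]
        (Y : Type) [Fintype Y] [Nonempty Y]
        (d : ℕ) (φ : X → Y → EuclideanSpace ℝ (Fin d)),
        (∀ x y, ‖φ x y‖ ≤ 1) →
        (∀ y, Measurable fun x => φ x y) →
        ∀ B : ℝ, 1 ≤ B →
        ∀ (r : X → Y → ℝ) (Rmax : ℝ), (∀ x y, |r x y| ≤ Rmax) →
        (∀ y, Measurable fun x => r x y) →
        ∀ β : ℝ, 0 < β →
        ∀ (T : ℕ) (lam : ℝ), 4 * β ^ 2 * B ^ 2 + Rmax ^ 2 ≤ lam →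
        ∀ θstar : EuclideanSpace ℝ (Fin d), ‖θstar‖ ≤ B →
        ∀ θ : Fin T → EuclideanSpace ℝ (Fin d), (∀ t, ‖θ t‖ ≤ B) →
        let pi : EuclideanSpace ℝ (Fin d) → X → Y → ℝ := fun θv x y =>
          Real.exp ⟪φ x y, θv⟫ / ∑ y', Real.exp ⟪φ x y', θv⟫
        let g : Fin T → X → Y → Y → ℝ := fun t x y y' =>
          β * Real.log (pi (θ t) x y / pi θstar x y) - r x y
            - β * Real.log (pi (θ t) x y' / pi θstar x y') + r x y'
        let E : (X → Y → ℝ) → (X → Y → Y → ℝ) → ℝ := fun w f =>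
          ∫ x, ∑ y, ∑ y', w x y * pi θstar x y' * f x y y' ∂μ
        ∑ t : Fin T, (E (pi (θ t)) (g t)) ^ 2
            / max lam (∑ i ∈ Finset.Iio t, E (pi (θ i)) fun x y y' => (g t x y y') ^ 2)
          ≤ c * d * Real.log (T + 1) := by
  refine ⟨54, by norm_num, ?_⟩
  intro X _ μ _ Y _ _ d φ hφ hφm B hB r Rmax hr hrm β hβ T lam hlam θstar hθstar θ hθ pi g E
  have hpi0 : ∀ θv x y, 0 ≤ pi θv x y := fun θv x y =>
    div_nonneg (Real.exp_pos _).le (sum_exp_inner_pos (φ x) θv).le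
  have hpi1 : ∀ θv x, ∑ y, pi θv x y = 1 := fun θv x => by
    simp only [pi, ← Finset.sum_div]
    exact div_self (sum_exp_inner_pos (φ x) θv).ne'
  have hpim : ∀ θv y, Measurable fun x => pi θv x y := fun θv y =>
    ((hφm y).inner measurable_const).exp.div
      (Finset.measurable_fun_sum _ fun z _ => ((hφm z).inner measurable_const).exp)
  have hg : ∀ t x y y', g t x y y'
      = β * ⟪φ x y - φ x y', θ t - θstar⟫ - (r x y - r x y') := by
    intro t x y y'
    simp only [g, pi, log_softmax_ratio (φ x)]
    rw [inner_sub_left]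
    ring
  rcases Nat.eq_zero_or_pos d with rfl | hd
  · have hE : ∀ t, E (pi (θ t)) (g t) = 0 := by
      intro t
      simp only [E, hg, Subsingleton.elim (θ t) θstar, sub_self, inner_zero_right, mul_zero,
        zero_sub]
      refine integral_eq_zero_of_ae (ae_of_all _ fun x => ?_)
      have hanti : ∑ y, ∑ y', pi θstar x y * pi θstar x y' * -(r x y - r x y')
          = -∑ y, ∑ y', pi θstar x y * pi θstar x y' * -(r x y - r x y') := by
        conv_lhs => rw [Finset.sum_comm]
        simp only [← Finset.sum_neg_distrib]
        exact Finset.sum_congr rfl fun y _ => Finset.sum_congr rfl fun y' _ => by ring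
      change ∑ y, ∑ y', pi θstar x y * pi θstar x y' * -(r x y - r x y') = 0
      linarith
    simp [hE]
  · have hprod : ∀ (a : Y → Y → ℝ), ∑ y, ∑ y', a y y' = ∑ z : Y × Y, a z.1 z.2 := fun a =>
      (Fintype.sum_prod_type' a).symm
    have key := sum_sq_average_div_le (μ := μ) (Z := Y × Y)
      (p := fun i x z => pi (θ i) x z.1 * pi θstar x z.2)
      (ψ := fun x z => φ x z.1 - φ x z.2) (ρ := fun x z => r x z.1 - r x z.2)
      (R := Rmax) (β := β) (B := B) (lam := lam) (δ := fun t => θ t - θstar)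
      (fun i z => (hpim (θ i) z.1).mul (hpim θstar z.2))
      (fun i x z => mul_nonneg (hpi0 _ _ _) (hpi0 _ _ _))
      (fun i x => by
        rw [← hprod fun y y' => pi (θ i) x y * pi θstar x y']
        simp only [← Finset.mul_sum, hpi1, mul_one])
      (fun z => (hφm z.1).sub (hφm z.2))
      (fun x z => (norm_sub_le _ _).trans (by linarith [hφ x z.1, hφ x z.2]))
      (fun z => (hrm z.1).sub (hrm z.2))
      (fun x z => (abs_sub _ _).trans (by linarith [hr x z.1, hr x z.2]))
      hβ (by linarith) hlam
      (fun t => (norm_sub_le _ _).trans (by linarith [hθ t]))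
    simp only [E, hg, hprod]
    refine key.trans ?_
    have hd1 : (1 : ℝ) ≤ d := by exact_mod_cast hd
    have hlogT : 0 ≤ Real.log (T + 1) := Real.log_nonneg (by linarith [T.cast_nonneg (α := ℝ)])
    calc 9 * ((d : ℝ) + 1) * Real.log (1 + 4 * T)
        ≤ 9 * ((d : ℝ) + d) * (3 * Real.log (T + 1)) := by
          have hlog : 0 ≤ Real.log (1 + 4 * T) :=
            Real.log_nonneg (by linarith [T.cast_nonneg (α := ℝ)])
          gcongr
          exact log_one_add_four_mul_le T
      _ = 54 * d * Real.log (T + 1) := by ring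
end

section
/- Let X be a prompt set with probability distribution μ, Y a finite response set, and π_base a conditional distribution with π_base(y|x) > 0 for all x, y. Let y*(x) := argmax_{y∈Y} π_base(y|x) denote the set of maximizers, and suppose the margin condition holds with parameter γ > 0: for μ-almost every x and every y' ∉ y*(x), max_{y∈Y} π_base(y|x) ≥ (1+γ)·π_base(y'|x). Define the comparator model π*(y|x) := π_base(y|x)·1{y ∈ y*(x)}/π_base(y*(x)|x). Then for every model π̂ and every δ ∈ (0,1): E_{x∼μ} E_{y∼π*(·|x), y'∼π̂(·|x)}[log π_base(y|x) − log π_base(y'|x)] ≥ log(1+γ)·δ·P_{x∼μ}[π̂(y*(x)|x) ≤ 1−δ]. -/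
open MeasureTheory Finset
open scoped ENNReal Classical

/-- Conditioning positive weights on their argmax set gives weights of total mass one. -/
theorem sum_argmax_weights_eq_one {Y : Type*} [Fintype Y] [Nonempty Y]
    (p : Y → ℝ) (hpos : ∀ y, 0 < p y) :
    ∑ y, (if ∀ z, p z ≤ p y then p y else 0) /
      ∑ u ∈ univ.filter (fun u => ∀ z, p z ≤ p u), p u = 1 := by
  obtain ⟨m, hm⟩ := Finite.exists_max p
  have hZ : 0 < ∑ u ∈ univ.filter (fun u => ∀ z, p z ≤ p u), p u :=
    sum_pos (fun u _ => hpos u) ⟨m, by simpa using hm⟩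
  rw [← sum_div, ← sum_filter, div_self hZ.ne']

/-- Under the margin condition, the log-likelihood gap between the argmax-conditioned weights
and a distribution `q` is at least `log (1 + γ)` times the mass `q` puts off the argmax set. -/
theorem log_margin_mul_le_log_gap {Y : Type*} [Fintype Y] [Nonempty Y]
    (p : Y → ℝ) (hpos : ∀ y, 0 < p y) (γ : ℝ) (hγ : 0 < γ)
    (hmargin : ∀ y', ¬ (∀ z, p z ≤ p y') → (1 + γ) * p y' ≤ univ.sup' univ_nonempty p)
    (q : Y → ℝ) (hq : ∀ y, 0 ≤ q y) (hqsum : ∑ y, q y = 1) :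
    Real.log (1 + γ) * (1 - ∑ y ∈ univ.filter (fun y => ∀ z, p z ≤ p y), q y)
      ≤ ∑ y, ∑ y', ((if ∀ z, p z ≤ p y then p y else 0) /
          ∑ u ∈ univ.filter (fun u => ∀ z, p z ≤ p u), p u) * q y' *
            (Real.log (p y) - Real.log (p y')) := by
  have hZ : 0 ≤ ∑ u ∈ univ.filter (fun u => ∀ z, p z ≤ p u), p u :=
    sum_nonneg fun u _ => (hpos u).le
  have hmass : Real.log (1 + γ) * (1 - ∑ y ∈ univ.filter (fun y => ∀ z, p z ≤ p y), q y)
      = (∑ y, (if ∀ z, p z ≤ p y then p y else 0) /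
          ∑ u ∈ univ.filter (fun u => ∀ z, p z ≤ p u), p u) *
        ∑ y', q y' * (if ∀ z, p z ≤ p y' then 0 else Real.log (1 + γ)) := by
    rw [sum_argmax_weights_eq_one p hpos, one_mul, ← hqsum, sum_filter, ← sum_sub_distrib, mul_sum]
    refine sum_congr rfl fun y _ => ?_
    split_ifs <;> ring
  rw [hmass, sum_mul_sum]
  refine sum_le_sum fun y _ => sum_le_sum fun y' _ => ?_
  rw [← mul_assoc]
  by_cases hy : ∀ z, p z ≤ p y
  · refine mul_le_mul_of_nonneg_left ?_ ?_
    · split_ifs with hy'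
      · exact sub_nonneg.2 (Real.log_le_log (hpos y') (hy y'))
      · have hle : (1 + γ) * p y' ≤ p y :=
          (hmargin y' hy').trans (sup'_le _ _ fun z _ => hy z)
        have hlog := Real.log_le_log (mul_pos (by linarith) (hpos y')) hle
        rw [Real.log_mul (by linarith) (hpos y').ne'] at hlog
        linarith
    · rw [if_pos hy]
      exact mul_nonneg (div_nonneg (hpos y).le hZ) (hq y')
  · simp [hy]

/-- The mass a measurable model puts on the argmax set of another one is measurable. -/
theorem measurable_sum_argmax {X Y : Type*} [MeasurableSpace X] [Fintype Y]
    {p q : X → Y → ℝ} (hp : ∀ y, Measurable fun x => p x y)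
    (hq : ∀ y, Measurable fun x => q x y) :
    Measurable fun x => ∑ y ∈ univ.filter (fun y => ∀ z, p x z ≤ p x y), q x y := by
  simp only [sum_filter]
  refine Finset.measurable_sum _ fun y _ => Measurable.ite ?_ (hq y) measurable_const
  rw [Set.ofPred_forall]
  exact MeasurableSet.iInter fun z => measurableSet_le (hp z) (hp y)

/-- Under the margin condition with parameter `γ`, the expected log-likelihood gap
between the conditioned comparator `π*` (i.e. `π_base` conditioned on its argmax set)
and any model `π̂` is at least `log(1+γ)·δ·P[π̂(y*(x)|x) ≤ 1-δ]`. -/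
theorem margin_log_gap_lower_bound
    {X : Type} [MeasurableSpace X] (μ : Measure X) [IsProbabilityMeasure μ]
    {Y : Type} [Fintype Y] [Nonempty Y]
    (pb : X → Y → ℝ) (hpos : ∀ x y, 0 < pb x y) (hsum : ∀ x, ∑ y, pb x y = 1)
    (hmeas : ∀ y, Measurable fun x => pb x y)
    (γ : ℝ) (hγ : 0 < γ)
    (hmargin : ∀ᵐ x ∂μ, ∀ y' : Y, ¬ (∀ z, pb x z ≤ pb x y') →
        (1 + γ) * pb x y' ≤ univ.sup' univ_nonempty (pb x))
    (phat : X → Y → ℝ) (hhpos : ∀ x y, 0 ≤ phat x y) (hhsum : ∀ x, ∑ y, phat x y = 1)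
    (hhmeas : ∀ y, Measurable fun x => phat x y)
    (δ : ℝ) (hδ : δ ∈ Set.Ioo (0 : ℝ) 1) :
    ENNReal.ofReal (Real.log (1 + γ) * δ) *
        μ {x | ∑ y ∈ univ.filter (fun y => ∀ z, pb x z ≤ pb x y), phat x y ≤ 1 - δ}
      ≤ ∫⁻ x, ENNReal.ofReal (∑ y, ∑ y',
          ((if ∀ z, pb x z ≤ pb x y then pb x y else 0) /
              ∑ u ∈ univ.filter (fun u => ∀ z, pb x z ≤ pb x u), pb x u) * phat x y' *
            (Real.log (pb x y) - Real.log (pb x y'))) ∂μ := by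
  rw [← lintegral_indicator_const
    (measurableSet_le (measurable_sum_argmax hmeas hhmeas) measurable_const)]
  refine lintegral_mono_ae (hmargin.mono fun x hx => Set.indicator_apply_le' (fun hxS => ?_)
    (fun _ => zero_le))
  have hmass : δ ≤ 1 - ∑ y ∈ univ.filter (fun y => ∀ z, pb x z ≤ pb x y), phat x y :=
    le_sub_comm.1 hxS
  exact ENNReal.ofReal_le_ofReal <|
    (mul_le_mul_of_nonneg_left hmass (Real.log_nonneg (by linarith))).trans
      (log_margin_mul_le_log_gap (pb x) (hpos x) γ hγ hx (phat x) (hhpos x) (hhsum x))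
end

section
/- Let Y be a finite response set, π_base(·|x) a probability distribution on Y with π_base(y|x) > 0 for all y, and y*(x) its set of maximizers. Suppose the margin condition holds at x with parameter γ ∈ (0,1]: max_{y∈Y} π_base(y|x) ≥ (1+γ)·π_base(y'|x) for all y' ∉ y*(x). Let δ ∈ (0,1) and β > 0 satisfy 1/β ≥ (2/γ)·log(2|Y|/δ), and define π*_β(y|x) := π_base(y|x)^{1+1/β}/Σ_{y'∈Y} π_base(y'|x)^{1+1/β}. Then π*_β(y*(x)|x) ≥ 1 − δ/2. -/
open Finset
open scoped Classical

theorem half_le_log_one_add {x : ℝ} (hx : x ∈ Set.Icc (0 : ℝ) 2) : x / 2 ≤ Real.log (1 + x) := by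
  refine le_trans ?_ (Real.le_log_one_add_of_nonneg hx.1)
  rw [div_le_div_iff₀ two_pos (by linarith [hx.1])]
  nlinarith [hx.1, hx.2]

/-- The exponent `t` is large enough for a multiplicative gap `1 + γ` to be amplified beyond `a`. -/
theorem le_one_add_rpow_of_log_le {a γ t : ℝ} (ha : 0 < a) (hγ : γ ∈ Set.Ioc (0 : ℝ) 1)
    (ht : 0 ≤ t) (h : 2 / γ * Real.log a ≤ t) : a ≤ (1 + γ) ^ t := by
  have hγ0 := hγ.1
  rw [Real.le_rpow_iff_log_le ha (by linarith)]
  have hlog := half_le_log_one_add (x := γ) ⟨hγ0.le, by linarith [hγ.2]⟩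
  calc Real.log a = 2 / γ * Real.log a * (γ / 2) := by field_simp
    _ ≤ t * (γ / 2) := by gcongr
    _ ≤ t * Real.log (1 + γ) := by gcongr

/-- If each weight off the event `q` is at most `ε / |Y|` times the total, then the normalized
mass of `q` is at least `1 - ε`. -/
theorem one_sub_le_sum_filter_div {Y : Type*} [Fintype Y] [Nonempty Y] (w : Y → ℝ) (q : Y → Prop)
    [DecidablePred q]
    (ε : ℝ) (hw : 0 < ∑ y, w y) (hε : 0 ≤ ε)
    (h : ∀ y, ¬ q y → Fintype.card Y * w y ≤ ε * ∑ y', w y') :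
    1 - ε ≤ ∑ y ∈ univ.filter q, w y / ∑ y', w y' := by
  have hN : (0 : ℝ) < Fintype.card Y := by exact_mod_cast Fintype.card_pos
  rw [← Finset.sum_div, le_div_iff₀ hw]
  have hsplit := Finset.sum_filter_add_sum_filter_not univ q w
  have hbad : ∑ y ∈ univ.filter (fun y => ¬ q y), w y ≤ ε * ∑ y, w y := by
    calc ∑ y ∈ univ.filter (fun y => ¬ q y), w y
        ≤ ∑ y ∈ univ.filter (fun y => ¬ q y), ε * (∑ y', w y') / Fintype.card Y := by
          refine Finset.sum_le_sum fun y hy => ?_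
          rw [le_div_iff₀ hN, mul_comm]
          exact h y (Finset.mem_filter.mp hy).2
      _ ≤ ∑ _y : Y, ε * (∑ y', w y') / Fintype.card Y :=
          Finset.sum_le_sum_of_subset_of_nonneg (Finset.filter_subset _ _)
            fun _ _ _ => by positivity
      _ = ε * ∑ y, w y := by
          rw [Finset.sum_const, Finset.card_univ, nsmul_eq_mul]
          field_simp
  linarith

/-- Under the margin condition with parameter `γ ∈ (0,1]`, if `1/β ≥ (2/γ)·log(2|Y|/δ)`
then the power-tilted distribution `π*_β ∝ p^{1+1/β}` puts mass at least `1 - δ/2` on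
the set of maximizers of `p`. -/
theorem tilted_mass_on_argmax
    {Y : Type} [Fintype Y] [Nonempty Y]
    (p : Y → ℝ) (hpos : ∀ y, 0 < p y) (hsum : ∑ y, p y = 1)
    (γ : ℝ) (hγ : γ ∈ Set.Ioc (0 : ℝ) 1)
    (hmargin : ∀ y', ¬ (∀ z, p z ≤ p y') → (1 + γ) * p y' ≤ univ.sup' univ_nonempty p)
    (δ : ℝ) (hδ : δ ∈ Set.Ioo (0 : ℝ) 1)
    (β : ℝ) (hβ : 0 < β)
    (hββ : (2 / γ) * Real.log (2 * Fintype.card Y / δ) ≤ 1 / β) :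
    1 - δ / 2 ≤
      ∑ y ∈ univ.filter (fun y => ∀ z, p z ≤ p y),
        p y ^ (1 + 1 / β) / ∑ y', p y' ^ (1 + 1 / β) := by
  obtain ⟨m, -, hm⟩ := Finset.exists_mem_eq_sup' univ_nonempty p
  rw [hm] at hmargin
  have hδ0 := hδ.1
  have hγ0 := hγ.1
  have hβ' : 0 < 1 / β := by positivity
  have hN : (0 : ℝ) < Fintype.card Y := by exact_mod_cast Fintype.card_pos
  have hnonneg : ∀ y ∈ univ, 0 ≤ p y ^ (1 + 1 / β) := fun y _ => (Real.rpow_pos_of_pos (hpos y) _).le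
  have hmax : p m ^ (1 + 1 / β) ≤ ∑ y, p y ^ (1 + 1 / β) :=
    Finset.single_le_sum hnonneg (mem_univ m)
  have hgap : 2 * Fintype.card Y / δ ≤ (1 + γ) ^ (1 + 1 / β) :=
    le_one_add_rpow_of_log_le (by positivity) hγ (by linarith) (by linarith)
  refine one_sub_le_sum_filter_div (fun y => p y ^ (1 + 1 / β)) (fun y => ∀ z, p z ≤ p y) (δ / 2)
    ((Real.rpow_pos_of_pos (hpos m) _).trans_le hmax) (by linarith) fun y hy => ?_
  have hy0 := hpos y
  calc Fintype.card Y * p y ^ (1 + 1 / β)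
      = δ / 2 * (2 * Fintype.card Y / δ * p y ^ (1 + 1 / β)) := by field_simp
    _ ≤ δ / 2 * ((1 + γ) ^ (1 + 1 / β) * p y ^ (1 + 1 / β)) := by gcongr
    _ = δ / 2 * ((1 + γ) * p y) ^ (1 + 1 / β) := by
        rw [Real.mul_rpow (by linarith) hy0.le]
    _ ≤ δ / 2 * p m ^ (1 + 1 / β) := by
        gcongr
        exact hmargin y hy
    _ ≤ δ / 2 * ∑ y', p y' ^ (1 + 1 / β) := by gcongr
end

section
/- Let X be a prompt set with probability distribution μ and Y a finite response set, and let π_base be a conditional distribution. Fix γ ∈ [0,1), let Y_γ(x) := {y ∈ Y : π_base(y|x) ≥ (1−γ)·max_{y'} π_base(y'|x)}, and let C_{cov,γ} := E_{x∼μ}[1/π_base(Y_γ(x)|x)], assumed finite. Let δ ∈ (0,1), let N* be a positive integer, let N be a positive integer with N ≥ N*·log(2/δ), and let π^BoN_N(·|x) be the law of the best-of-N response: draw y_1,…,y_N i.i.d. from π_base(·|x) and output an element of argmax_{i∈[N]} π_base(y_i|x) (ties broken by a fixed measurable rule). Then for every model π̂: P_{x∼μ}[π̂(Y_γ(x)|x)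 ≤ 1−δ] ≤ (12/δ)·E_{x∼μ}[H²(π̂(·|x), π^BoN_N(·|x))] + C_{cov,γ}/N*. -/
open MeasureTheory Finset
open scoped ENNReal Classical

/-- Reverse triangle inequality for the Hellinger distance restricted to a finite set. -/
lemma sq_sqrt_sum_sub_sqrt_sum_le {ι : Type*} (s : Finset ι) {p q : ι → ℝ}
    (hp : ∀ i, 0 ≤ p i) (hq : ∀ i, 0 ≤ q i) :
    (√(∑ i ∈ s, p i) - √(∑ i ∈ s, q i)) ^ 2 ≤ ∑ i ∈ s, (√(p i) - √(q i)) ^ 2 := by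
  have cauchy := Real.sum_sqrt_mul_sqrt_le s hp hq
  have expand : ∑ i ∈ s, (√(p i) - √(q i)) ^ 2
      = ∑ i ∈ s, p i + ∑ i ∈ s, q i - 2 * ∑ i ∈ s, √(p i) * √(q i) := by
    rw [mul_sum, ← sum_add_distrib, ← sum_sub_distrib]
    refine sum_congr rfl fun i _ => ?_
    rw [sub_sq, Real.sq_sqrt (hp i), Real.sq_sqrt (hq i)]
    ring
  rw [expand, sub_sq, Real.sq_sqrt (sum_nonneg fun i _ => hp i),
    Real.sq_sqrt (sum_nonneg fun i _ => hq i)]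
  linarith

/-- Two numbers `a ≥ δ` and `b ≤ δ / 2` have square roots at squared distance at least `δ / 12`. -/
lemma div_twelve_le_sq_sqrt_sub_sqrt {a b δ : ℝ} (hδ : 0 < δ) (ha : δ ≤ a) (hb : b ≤ δ / 2) :
    δ / 12 ≤ (√a - √b) ^ 2 := by
  have hsqrt : √(δ / 2) ≤ 71 / 100 * √δ := by
    rw [Real.sqrt_le_left (by positivity), mul_pow, Real.sq_sqrt hδ.le]
    linarith
  have hgap : 29 / 100 * √δ ≤ √a - √b := by
    linarith [Real.sqrt_le_sqrt ha, Real.sqrt_le_sqrt hb]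
  calc δ / 12 ≤ (29 / 100 * √δ) ^ 2 := by
        rw [mul_pow, Real.sq_sqrt hδ.le]
        linarith
    _ ≤ (√a - √b) ^ 2 := pow_le_pow_left₀ (by positivity) hgap 2

/-- If each draw landing in `s` forces the selected value into `s`, the selected value avoids `s`
with probability at most that of all `N` draws avoiding `s`. -/
lemma sum_compl_select_le_pow {Y : Type*} [Fintype Y] {N : ℕ} {p : Y → ℝ} (hp : ∀ y, 0 ≤ p y)
    (s : Finset Y) (sel : (Fin N → Y) → Y) (hsel : ∀ f i, f i ∈ s → sel f ∈ s) :
    ∑ y ∈ sᶜ, ∑ f ∈ (univ : Finset (Fin N → Y)).filter (fun f => sel f = y), ∏ i, p (f i)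
      ≤ (∑ y ∈ sᶜ, p y) ^ N := by
  have hpow : (∑ y ∈ sᶜ, p y) ^ N
      = ∑ f ∈ Fintype.piFinset (fun _ : Fin N => sᶜ), ∏ i, p (f i) := by
    rw [← prod_univ_sum]
    simp
  rw [hpow, ← sum_biUnion]
  · refine sum_le_sum_of_subset_of_nonneg (fun f hf => ?_) fun f _ _ => prod_nonneg fun i _ => hp _
    simp only [mem_biUnion, mem_filter, mem_univ, true_and, mem_compl] at hf
    obtain ⟨y, hy, rfl⟩ := hf
    simpa using fun i hi => hy (hsel f i hi)
  · intro a _ b _ hab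
    refine disjoint_left.2 fun f hfa hfb => hab ?_
    rw [← (mem_filter.1 hfa).2, ← (mem_filter.1 hfb).2]

/-- A sum of measurable functions over a measurably varying finite set is measurable. -/
lemma measurable_sum_random_finset {X Y : Type*} [MeasurableSpace X] [Fintype Y]
    {s : X → Finset Y} (hs : ∀ y, MeasurableSet {x | y ∈ s x}) {g : X → Y → ℝ}
    (hg : ∀ y, Measurable fun x => g x y) : Measurable fun x => ∑ y ∈ s x, g x y := by
  have hsum : (fun x => ∑ y ∈ s x, g x y) = fun x => ∑ y, if y ∈ s x then g x y else 0 := by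
    ext x
    simp
  rw [hsum]
  exact Finset.measurable_sum _ fun y _ => Measurable.ite (hs y) (hg y) measurable_const

/-- After `N ≥ M log (2 / δ)` trials, an event of probability `1 - r ≥ 1 / M` fails to occur with
probability at most `δ / 2`. -/
lemma pow_le_half_of_log_le {r δ M : ℝ} {N : ℕ} (hr : 0 ≤ r) (hδ : 0 < δ) (hM : 0 < M)
    (hrM : 1 / M ≤ 1 - r) (hN : M * Real.log (2 / δ) ≤ N) : r ^ N ≤ δ / 2 := by
  have hexp : r ≤ Real.exp (-(1 / M)) := by
    linarith [Real.add_one_le_exp (-(1 / M))]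
  have hlog : Real.log (2 / δ) ≤ N * (1 / M) := by
    rw [mul_one_div, le_div_iff₀ hM]
    linarith
  calc r ^ N ≤ Real.exp (-(1 / M)) ^ N := pow_le_pow_left₀ hr hexp N
    _ = Real.exp (N * -(1 / M)) := (Real.exp_nat_mul _ _).symm
    _ ≤ Real.exp (-Real.log (2 / δ)) := Real.exp_le_exp.2 (by linarith)
    _ = δ / 2 := by rw [← Real.log_inv, Real.exp_log (by positivity), inv_div]

/-- Main bound for SFT-sharpening: the probability that a model `π̂` places mass at most
`1-δ` on the `(1-γ)`-approximate argmax set is controlled by `(12/δ)` times its expected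
squared Hellinger distance to the best-of-`N` distribution, plus `C_{cov,γ}/N*`. -/
theorem sft_sharpening_bound
    {X : Type} [MeasurableSpace X] (μ : Measure X) [IsProbabilityMeasure μ]
    {Y : Type} [Fintype Y] [Nonempty Y]
    (pb : X → Y → ℝ) (hpos : ∀ x y, 0 < pb x y) (hsum : ∀ x, ∑ y, pb x y = 1)
    (hmeas : ∀ y, Measurable fun x => pb x y)
    (γ : ℝ) (hγ : γ ∈ Set.Ico (0 : ℝ) 1)
    (δ : ℝ) (hδ : δ ∈ Set.Ioo (0 : ℝ) 1)
    (Nstar N : ℕ) (hNstar : 0 < Nstar) (hN0 : 0 < N)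
    (hN : (Nstar : ℝ) * Real.log (2 / δ) ≤ (N : ℝ))
    (Ygam : X → Finset Y)
    (hYgam : ∀ x, Ygam x =
      univ.filter fun y => (1 - γ) * univ.sup' univ_nonempty (pb x) ≤ pb x y)
    (Ccov : ℝ≥0∞)
    (hCcov : Ccov = ∫⁻ x, ENNReal.ofReal (1 / ∑ y ∈ Ygam x, pb x y) ∂μ)
    (hCfin : Ccov ≠ ⊤)
    (sel : X → (Fin N → Y) → Y)
    (hsel : ∀ x f, (∃ i, sel x f = f i) ∧ ∀ i, pb x (f i) ≤ pb x (sel x f))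
    (pbon : X → Y → ℝ)
    (hpbon : ∀ x y, pbon x y =
      ∑ f ∈ (univ : Finset (Fin N → Y)).filter (fun f => sel x f = y), ∏ i, pb x (f i))
    (phat : X → Y → ℝ) (hhpos : ∀ x y, 0 ≤ phat x y) (hhsum : ∀ x, ∑ y, phat x y = 1)
    (hhmeas : ∀ y, Measurable fun x => phat x y) :
    μ {x | ∑ y ∈ Ygam x, phat x y ≤ 1 - δ}
      ≤ ENNReal.ofReal (12 / δ) *
          (∫⁻ x, ENNReal.ofReal (∑ y, (Real.sqrt (phat x y) - Real.sqrt (pbon x y)) ^ 2) ∂μ)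
        + Ccov / (Nstar : ℝ≥0∞) := by
  have hδ0 := hδ.1
  have hNs : (0 : ℝ) < Nstar := by exact_mod_cast hNstar
  have hmem : ∀ y, MeasurableSet {x | y ∈ Ygam x} := by
    intro y
    simp only [hYgam, mem_filter, mem_univ, true_and]
    refine measurableSet_le (measurable_const.mul ?_) (hmeas y)
    have hsup := Finset.measurable_sup' (f := fun y x => pb x y)
      (univ_nonempty (α := Y)) fun y _ => hmeas y
    convert hsup using 1
    ext x
    simp [Finset.sup'_apply]
  have hcov := measurable_sum_random_finset hmem hmeas
  have hhat := measurable_sum_random_finset hmem hhmeas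
  set U : Set X := {x | (Nstar : ℝ≥0∞) ≤ ENNReal.ofReal (1 / ∑ y ∈ Ygam x, pb x y)} with hU
  set T : Set X := {x | ∑ y ∈ Ygam x, phat x y ≤ 1 - δ} \ U with hT
  have hinv : Measurable fun x => ENNReal.ofReal (1 / ∑ y ∈ Ygam x, pb x y) :=
    (measurable_const.div hcov).ennreal_ofReal
  have hTmeas : MeasurableSet T :=
    (measurableSet_le hhat measurable_const).diff (measurableSet_le measurable_const hinv)
  have hUbound : μ U ≤ Ccov / Nstar := by
    rw [hCcov]
    exact meas_ge_le_lintegral_div hinv.aemeasurable (by exact_mod_cast hNstar.ne') (by simp)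
  have hellinger : ∀ x ∈ T,
      δ / 12 ≤ ∑ y, (Real.sqrt (phat x y) - Real.sqrt (pbon x y)) ^ 2 := by
    rintro x ⟨hxS, hxU⟩
    have hpbon0 : ∀ y, 0 ≤ pbon x y := fun y => by
      rw [hpbon]
      exact sum_nonneg fun f _ => prod_nonneg fun i _ => (hpos _ _).le
    have hsplit := sum_add_sum_compl (Ygam x) (pb x)
    have hsplit_hat := sum_add_sum_compl (Ygam x) (phat x)
    rw [hsum] at hsplit
    rw [hhsum] at hsplit_hat
    have hne : (Ygam x).Nonempty := by
      obtain ⟨y, -, hy⟩ := exists_mem_eq_sup' (univ_nonempty (α := Y)) (pb x)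
      refine ⟨y, ?_⟩
      rw [hYgam, mem_filter, hy]
      exact ⟨mem_univ _, by nlinarith [hpos x y, hγ.1]⟩
    have hcov_pos : 0 < ∑ y ∈ Ygam x, pb x y := sum_pos (fun y _ => hpos x y) hne
    have hcov_lt : 1 / ∑ y ∈ Ygam x, pb x y < Nstar := by
      rw [hU, Set.mem_ofPred_eq, not_le, ← ENNReal.ofReal_natCast] at hxU
      exact (ENNReal.ofReal_lt_ofReal_iff hNs).1 hxU
    have hbon : ∑ y ∈ (Ygam x)ᶜ, pbon x y ≤ δ / 2 := by
      simp only [hpbon]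
      refine (sum_compl_select_le_pow (fun y => (hpos x y).le) (Ygam x) (sel x) ?_).trans
        (pow_le_half_of_log_le (sum_nonneg fun y _ => (hpos x y).le) hδ0 hNs ?_ hN)
      · intro f i hi
        rw [hYgam, mem_filter] at hi ⊢
        exact ⟨mem_univ _, hi.2.trans ((hsel x f).2 i)⟩
      · have := (one_div_lt hcov_pos hNs).1 hcov_lt
        linarith
    have hhat_compl : δ ≤ ∑ y ∈ (Ygam x)ᶜ, phat x y := by
      have : ∑ y ∈ Ygam x, phat x y ≤ 1 - δ := hxS
      linarith
    calc δ / 12 ≤ _ := div_twelve_le_sq_sqrt_sub_sqrt hδ0 hhat_compl hbon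
      _ ≤ _ := sq_sqrt_sum_sub_sqrt_sum_le _ (hhpos x) hpbon0
      _ ≤ _ := sum_le_univ_sum_of_nonneg fun y => sq_nonneg _
  have hTbound : μ T ≤ ENNReal.ofReal (12 / δ) *
      ∫⁻ x, ENNReal.ofReal (∑ y, (Real.sqrt (phat x y) - Real.sqrt (pbon x y)) ^ 2) ∂μ := by
    have hone : ENNReal.ofReal (12 / δ) * ENNReal.ofReal (δ / 12) = 1 := by
      rw [← ENNReal.ofReal_mul (by positivity)]
      field_simp
      simp
    -- `pbon` need not be measurable in `x`, so integrate the measurable minorant on `T`.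
    calc μ T = ENNReal.ofReal (12 / δ) * (ENNReal.ofReal (δ / 12) * μ T) := by
          rw [← mul_assoc, hone, one_mul]
      _ = ENNReal.ofReal (12 / δ) * ∫⁻ x, T.indicator (fun _ => ENNReal.ofReal (δ / 12)) x ∂μ := by
          rw [lintegral_indicator_const hTmeas]
      _ ≤ _ := by
          gcongr with x
          exact Set.indicator_le (fun x hx => ENNReal.ofReal_le_ofReal (hellinger x hx)) x
  calc μ {x | ∑ y ∈ Ygam x, phat x y ≤ 1 - δ} ≤ μ (T ∪ U) :=
        measure_mono (by rw [hT, Set.sdiff_union_self]; exact Set.subset_union_left)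
    _ ≤ μ T + μ U := measure_union_le _ _
    _ ≤ _ := add_le_add hTbound hUbound
end

section
/- Let d ∈ ℕ, c ∈ (0,1], and let Y ⊆ ℝ^d be a finite set of unit vectors such that ⟨y, y'⟩ ≤ 1 − c for all distinct y, y' ∈ Y. Fix y* ∈ Y and define the softmax distribution π on Y by π(y) := exp(⟨y, y*⟩)/Σ_{y'∈Y} exp(⟨y', y*⟩). Then: (i) π(y*) ≥ e^c·π(y) for every y ∈ Y with y ≠ y*, so y* is the unique maximizer of π and π satisfies the margin condition with parameter γ = e^c − 1 > 0; and (ii) 1/π(y*) ≥ e^{−2}·|Y|, i.e., the coverage coefficient of π at its maximizer is at least e^{−2}·|Y|. -/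
open Finset
open scoped RealInnerProductSpace

/-- A softmax model over a packing of unit vectors: (i) `π(y*) ≥ e^c·π(y)` for every
`y ≠ y*` (so `y*` is the unique maximizer and the margin condition holds with
`γ = e^c - 1 > 0`), while (ii) the coverage coefficient `1/π(y*)` is at least
`e^{-2}·|Y|`. -/
theorem softmax_packing_margin_and_coverage
    {d : ℕ} (c : ℝ) (hc : c ∈ Set.Ioc (0 : ℝ) 1)
    (Y : Finset (EuclideanSpace ℝ (Fin d))) (hYne : Y.Nonempty)
    (hunit : ∀ y ∈ Y, ‖y‖ = 1)
    (hpack : ∀ y ∈ Y, ∀ y' ∈ Y, y ≠ y' → ⟪y, y'⟫ ≤ 1 - c)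
    (ystar : EuclideanSpace ℝ (Fin d)) (hystar : ystar ∈ Y)
    (π : EuclideanSpace ℝ (Fin d) → ℝ)
    (hπ : ∀ y, π y = Real.exp ⟪y, ystar⟫ / ∑ y' ∈ Y, Real.exp ⟪y', ystar⟫) :
    (∀ y ∈ Y, y ≠ ystar → Real.exp c * π y ≤ π ystar)
    ∧ (∀ y ∈ Y, y ≠ ystar → π y < π ystar)
    ∧ Real.exp (-2) * (Y.card : ℝ) ≤ 1 / π ystar := by
  have hZ : 0 < ∑ y' ∈ Y, Real.exp ⟪y', ystar⟫ :=
    Finset.sum_pos (fun _ _ => Real.exp_pos _) hYne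
  have hself : ⟪ystar, ystar⟫ = 1 := by
    rw [real_inner_self_eq_norm_sq, hunit ystar hystar, one_pow]
  have hmargin : ∀ y ∈ Y, y ≠ ystar → Real.exp c * π y ≤ π ystar := by
    intro y hy hne
    rw [hπ y, hπ ystar, hself, ← mul_div_assoc, ← Real.exp_add]
    gcongr
    linarith [hpack y hy ystar hystar hne]
  refine ⟨hmargin, fun y hy hne => ?_, ?_⟩
  · have hpos : 0 < π y := by
      rw [hπ y]
      exact div_pos (Real.exp_pos _) hZ
    exact (lt_mul_of_one_lt_left hpos (Real.one_lt_exp_iff.mpr hc.1)).trans_le (hmargin y hy hne)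
  · have hlower : ∀ y ∈ Y, Real.exp (-1) ≤ Real.exp ⟪y, ystar⟫ := by
      intro y hy
      have habs := abs_real_inner_le_norm y ystar
      rw [hunit y hy, hunit ystar hystar, one_mul] at habs
      exact Real.exp_le_exp.mpr (abs_le.mp habs).1
    have hsum := Finset.card_nsmul_le_sum Y _ _ hlower
    rw [nsmul_eq_mul] at hsum
    rw [hπ ystar, hself, one_div_div, le_div_iff₀ (Real.exp_pos 1)]
    calc Real.exp (-2) * (Y.card : ℝ) * Real.exp 1
        = Y.card * (Real.exp (-2) * Real.exp 1) := by ring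
      _ = Y.card * Real.exp (-1) := by rw [← Real.exp_add]; norm_num
      _ ≤ _ := hsum
end
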